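/- arXiv:1704.01847 — 2 statements merged into one kernel-verified Lean document; each statement's English description precedes it below -/
import Mathlib

section
/- The sequence of Euler-discretized joint state-path and parameter log-posteriors ℓ̃_i hypo-converges, on the space 𝒵 := W²_n × ℝ^q × ℝ^m equipped with the topology of the norm ‖·‖_{W²} on the first factor and the Euclidean norms on the others, to the energy log-posterior ℓ_e. -/
open MeasureTheory Filter Set

/-- `ℝⁿ` with the Euclidean norm. -/
abbrev Eu (n : ℕ) := EuclideanSpace ℝ (Fin n)

/-- `ln` with values in `ℝ̄ = EReal` and `ln 0 := −∞`. -/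
noncomputable def elog (r : ℝ) : EReal := if r ≤ 0 then ⊥ else ((Real.log r : ℝ) : EReal)

/-- `(x, x')` is an element of `W²` on `[0, t_f]`: `x` is absolutely continuous with
a.e. derivative `x' ∈ L²`. -/
def IsW2 {n : ℕ} (tf : ℝ) (x x' : ℝ → Eu n) : Prop :=
  IntegrableOn x' (Icc 0 tf) ∧ IntegrableOn (fun t => ‖x' t‖ ^ 2) (Icc 0 tf) ∧
    ∀ t ∈ Icc (0:ℝ) tf, x t = x 0 + ∫ s in Ioc (0:ℝ) t, x' s

/-- The `W²` distance `‖x − y‖_{W²}` between `(x, x')` and `(y, y')`. -/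
noncomputable def W2dist {n : ℕ} (tf : ℝ) (x x' y y' : ℝ → Eu n) : ℝ :=
  Real.sqrt (‖x 0 - y 0‖ ^ 2 + ∫ s in Ioc (0:ℝ) tf, ‖x' s - y' s‖ ^ 2)

/-- `g ∈ PL(𝒫, ℝⁿ)`: `g` is continuous on `[0, t_f]` and affine on each subinterval
of the partition `t_0 < t_1 < ⋯ < t_N`. -/
def IsPL {n : ℕ} (tf : ℝ) (N : ℕ) (tP : ℕ → ℝ) (g : ℝ → Eu n) : Prop :=
  ContinuousOn g (Icc 0 tf) ∧
    ∀ k < N, ∃ a b : Eu n, ∀ s ∈ Icc (tP k) (tP (k + 1)), g s = a + s • b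

/-- `zt` is the Euler-discretized clean-state path associated with `(xt, ζ, ϑ)`. -/
def IsEulerPath {n q m : ℕ} (N : ℕ) (tP : ℕ → ℝ)
    (h : ℝ → Eu n → Eu q → Eu m → Eu q)
    (xt : ℝ → Eu n) (ζ : Eu q) (ϑ : Eu m) (zt : ℝ → Eu q) : Prop :=
  zt 0 = ζ ∧ ∀ k < N, ∀ s ∈ Ioc (tP k) (tP (k + 1)),
    zt s = zt (tP k) + (s - tP k) • h (tP k) (xt (tP k)) (zt (tP k)) ϑ

/-- The sum defining the quadratic (energy) term of the Euler-discretized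
log-posterior. -/
noncomputable def eulerSum {n q m : ℕ} (N : ℕ) (tP : ℕ → ℝ)
    (f : ℝ → Eu n → Eu q → Eu m → Eu n) (Ginv : Eu n → Eu n)
    (xt : ℝ → Eu n) (zt : ℝ → Eu q) (ϑ : Eu m) : ℝ :=
  ∑ k ∈ Finset.range N, (tP (k + 1) - tP k) *
    ‖Ginv ((tP (k + 1) - tP k)⁻¹ • (xt (tP (k + 1)) - xt (tP k))
      - f (tP k) (xt (tP k)) (zt (tP k)) ϑ)‖ ^ 2

/-- `v` is the value `ℓ̃(x̃, ζ, ϑ)` of the Euler-discretized joint state-path and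
parameter log-posterior: `−∞` unless `x̃ ∈ PL(𝒫)` and `ϑ ∈ S`, in which case it is
`ln ψ + ln π − ½ Σ δ_k |G⁻¹[Δx̃_k/δ_k − f]|²` with the Euler clean-state path. -/
def EulerVal {n q m : ℕ} (tf : ℝ) (N : ℕ) (tP : ℕ → ℝ) (S : Set (Eu m))
    (f : ℝ → Eu n → Eu q → Eu m → Eu n) (h : ℝ → Eu n → Eu q → Eu m → Eu q)
    (ψ : (ℝ → Eu n) → (ℝ → Eu q) → Eu m → ℝ) (pr : Eu n → Eu q → Eu m → ℝ)
    (Ginv : Eu n → Eu n)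
    (xt : ℝ → Eu n) (ζ : Eu q) (ϑ : Eu m) (v : EReal) : Prop :=
  (¬(IsPL tf N tP xt ∧ ϑ ∈ S) → v = ⊥) ∧
  ((IsPL tf N tP xt ∧ ϑ ∈ S) → ∃ zt : ℝ → Eu q, IsEulerPath N tP h xt ζ ϑ zt ∧
    v = elog (ψ xt zt ϑ) + elog (pr (xt 0) ζ ϑ)
      - ((((1:ℝ) / 2) * eulerSum N tP f Ginv xt zt ϑ : ℝ) : EReal))

/-- `v` is the value `ℓ_e(x, z₀, θ)` of the energy log-posterior: `−∞` unless
`θ ∈ S`, in which case it is `ln ψ + ln π − ½ ∫ |G⁻¹[ẋ − f]|² dt` with `z` the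
solution of the clean-state ODE. -/
def EnergyVal {n q m : ℕ} (tf : ℝ) (S : Set (Eu m))
    (f : ℝ → Eu n → Eu q → Eu m → Eu n) (h : ℝ → Eu n → Eu q → Eu m → Eu q)
    (ψ : (ℝ → Eu n) → (ℝ → Eu q) → Eu m → ℝ) (pr : Eu n → Eu q → Eu m → ℝ)
    (Ginv : Eu n → Eu n)
    (x x' : ℝ → Eu n) (z0 : Eu q) (θ : Eu m) (v : EReal) : Prop :=
  (θ ∉ S → v = ⊥) ∧
  (θ ∈ S → ∃ z : ℝ → Eu q, ContinuousOn z (Icc 0 tf) ∧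
    (∀ t ∈ Icc (0:ℝ) tf, z t = z0 + ∫ s in Ioc (0:ℝ) t, h s (x s) (z s) θ) ∧
    v = elog (ψ x z θ) + elog (pr (x 0) z0 θ)
      - ((((1:ℝ) / 2) * ∫ t in Ioc (0:ℝ) tf,
          ‖Ginv (x' t - f t (x t) (z t) θ)‖ ^ 2 : ℝ) : EReal))

structure TPart (tf : ℝ) (N : ℕ) (tP : ℕ → ℝ) (M : ℝ) : Prop where
  zero : tP 0 = 0
  last : tP N = tf
  lt : ∀ k < N, tP k < tP (k + 1)
  mesh : ∀ k < N, tP (k + 1) - tP k ≤ M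

noncomputable def pidx (N : ℕ) (tP : ℕ → ℝ) (t : ℝ) : ℕ :=
  open Classical in Nat.findGreatest (fun k => tP k < t) (N - 1)

lemma TPart.mono {tf : ℝ} {N : ℕ} {tP : ℕ → ℝ} {M : ℝ} (P : TPart tf N tP M) {j k : ℕ}
    (hjk : j ≤ k) (hk : k ≤ N) : tP j ≤ tP k := by
  induction k, hjk using Nat.le_induction with
  | base => exact le_rfl
  | succ k hjk ih => exact (ih (by omega)).trans (P.lt k (by omega)).le

lemma TPart.mem {tf : ℝ} {N : ℕ} {tP : ℕ → ℝ} {M : ℝ} (P : TPart tf N tP M) {k : ℕ}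
    (hk : k ≤ N) : tP k ∈ Icc 0 tf :=
  ⟨P.zero ▸ P.mono (Nat.zero_le k) hk, P.last ▸ P.mono hk le_rfl⟩

lemma TPart.idx {tf : ℝ} {N : ℕ} {tP : ℕ → ℝ} {M : ℝ} (P : TPart tf N tP M) {k : ℕ}
    (hk : k < N) {t : ℝ} (ht : t ∈ Ioc (tP k) (tP (k + 1))) : pidx N tP t = k := by
  classical
  unfold pidx
  rw [Nat.findGreatest_eq_iff]
  refine ⟨by omega, fun _ => ht.1, fun j hj hjN => ?_⟩
  have := P.mono (show k + 1 ≤ j from hj) (by omega)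
  exact not_lt.2 (ht.2.trans this)

lemma TPart.cover {tf : ℝ} {N : ℕ} {tP : ℕ → ℝ} {M : ℝ} (P : TPart tf N tP M)
    {t : ℝ} (ht : t ∈ Ioc 0 tf) : ∃ k < N, t ∈ Ioc (tP k) (tP (k + 1)) := by
  have key : ∀ K ≤ N, t ≤ tP K → ∃ k < N, t ∈ Ioc (tP k) (tP (k + 1)) := by
    intro K
    induction K with
    | zero => intro _ h; rw [P.zero] at h; exact absurd ht.1 (not_lt.2 h)
    | succ K ih =>
      intro hK h
      by_cases h2 : t ≤ tP K
      · exact ih (by omega) h2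
      · exact ⟨K, by omega, not_le.1 h2, h⟩
  exact key N le_rfl (P.last ▸ ht.2)

lemma TPart.sub {tf : ℝ} {N : ℕ} {tP : ℕ → ℝ} {M : ℝ} (P : TPart tf N tP M) {k : ℕ}
    (hk : k < N) : Ioc (tP k) (tP (k + 1)) ⊆ Ioc 0 tf :=
  Ioc_subset_Ioc (P.mem hk.le).1 (P.mem (show k + 1 ≤ N from hk)).2

lemma TPart.sum {E : Type*} [NormedAddCommGroup E] [NormedSpace ℝ E]
    {tf : ℝ} {N : ℕ} {tP : ℕ → ℝ} {M : ℝ} (P : TPart tf N tP M)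
    {y : ℝ → E} (hy : IntegrableOn y (Ioc 0 tf)) :
    ∫ t in Ioc 0 tf, y t = ∑ k ∈ Finset.range N, ∫ t in Ioc (tP k) (tP (k + 1)), y t := by
  have h := intervalIntegral.sum_integral_adjacent_intervals (f := y) (μ := volume) (a := tP)
    (n := N) (fun k hk => (intervalIntegrable_iff_integrableOn_Ioc_of_le (P.lt k hk).le).2
      (hy.mono_set (P.sub hk)))
  rw [P.zero, P.last, intervalIntegral.integral_of_le (P.last ▸ (P.mem le_rfl).1)] at h
  rw [← h]
  refine Finset.sum_congr rfl fun k hk => ?_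
  rw [intervalIntegral.integral_of_le (P.lt k (Finset.mem_range.1 hk)).le]

lemma step_memLp {d : ℕ} (tf : ℝ) (N : ℕ) (tP : ℕ → ℝ) (F : ℕ → Eu d) :
    MemLp (fun t => F (pidx N tP t)) 2 (volume.restrict (Ioc 0 tf)) := by
  classical
  have hm : Measurable (pidx N tP) := by
    unfold pidx
    exact measurable_findGreatest fun k _ => measurableSet_lt measurable_const measurable_id
  refine MemLp.of_bound ?_ (∑ k ∈ Finset.range (N + 1), ‖F k‖) (ae_of_all _ fun t => ?_)
  · exact ((measurable_from_nat (f := F)).comp hm).aestronglyMeasurable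
  · refine Finset.single_le_sum (f := fun k => ‖F k‖) (fun _ _ => norm_nonneg _) ?_
    have : pidx N tP t ≤ N - 1 := by unfold pidx; exact Nat.findGreatest_le _
    exact Finset.mem_range.2 (by omega)

lemma memLp_sq {d : ℕ} {s : Set ℝ} {y : ℝ → Eu d} (hy : MemLp y 2 (volume.restrict s)) :
    IntegrableOn (fun t => ‖y t‖ ^ 2) s :=
  (memLp_two_iff_integrable_sq_norm hy.1).1 hy

lemma IsW2.memLp {d : ℕ} {tf : ℝ} {x x' : ℝ → Eu d} (hx : IsW2 tf x x') :
    MemLp x' 2 (volume.restrict (Ioc 0 tf)) := by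
  have h1 := hx.1.mono_set (Ioc_subset_Icc_self (a := (0:ℝ)) (b := tf))
  exact (memLp_two_iff_integrable_sq_norm h1.aestronglyMeasurable).2
    (hx.2.1.mono_set Ioc_subset_Icc_self)

lemma memLp_int {d : ℕ} {a b : ℝ} {y : ℝ → Eu d} (hy : MemLp y 2 (volume.restrict (Ioc a b))) :
    IntegrableOn y (Ioc a b) := hy.integrable (by norm_num)

noncomputable def avg {d : ℕ} (y : ℝ → Eu d) (a b : ℝ) : Eu d :=
  (b - a)⁻¹ • ∫ t in Ioc a b, y t

lemma variance_id {d : ℕ} {a b : ℝ} (hab : a < b) {y : ℝ → Eu d}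
    (hy : MemLp y 2 (volume.restrict (Ioc a b))) (c : Eu d) :
    ∫ t in Ioc a b, ‖y t - c‖ ^ 2 =
      (∫ t in Ioc a b, ‖y t‖ ^ 2) - 2 * (b - a) * inner ℝ c (avg y a b) + (b - a) * ‖c‖ ^ 2 := by
  have h1 : ∀ t, ‖y t - c‖ ^ 2 = ‖y t‖ ^ 2 - 2 * inner ℝ c (y t) + ‖c‖ ^ 2 := by
    intro t; rw [norm_sub_sq_real, real_inner_comm]
  have hyi := memLp_int hy
  have hs := memLp_sq hy
  have hi : IntegrableOn (fun t => inner ℝ c (y t)) (Ioc a b) := hyi.const_inner c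
  simp_rw [h1]
  have hd : IntegrableOn (fun t => ‖y t‖ ^ 2 - 2 * inner ℝ c (y t)) (Ioc a b) :=
    hs.sub (hi.const_mul 2)
  rw [integral_add hd (integrable_const _),
    integral_sub hs (hi.const_mul 2), integral_const_mul, integral_inner hyi c]
  have hne : b - a ≠ 0 := by linarith
  simp only [integral_const, measureReal_restrict_apply_univ, Real.volume_real_Ioc_of_le hab.le,
    smul_eq_mul, avg, inner_smul_right]
  field_simp

lemma avg_min {d : ℕ} {a b : ℝ} (hab : a < b) {y : ℝ → Eu d}
    (hy : MemLp y 2 (volume.restrict (Ioc a b))) (c : Eu d) :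
    ∫ t in Ioc a b, ‖y t - avg y a b‖ ^ 2 ≤ ∫ t in Ioc a b, ‖y t - c‖ ^ 2 := by
  rw [variance_id hab hy, variance_id hab hy, real_inner_self_eq_norm_sq]
  have h : 0 ≤ (b - a) * ‖c - avg y a b‖ ^ 2 := by
    have := sub_pos.2 hab; positivity
  rw [norm_sub_sq_real] at h
  linarith

lemma avg_le {d : ℕ} {a b : ℝ} (hab : a < b) {y : ℝ → Eu d}
    (hy : MemLp y 2 (volume.restrict (Ioc a b))) :
    (b - a) * ‖avg y a b‖ ^ 2 ≤ ∫ t in Ioc a b, ‖y t‖ ^ 2 := by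
  have h : 0 ≤ ∫ t in Ioc a b, ‖y t - avg y a b‖ ^ 2 :=
    integral_nonneg fun t => by positivity
  rw [variance_id hab hy, real_inner_self_eq_norm_sq] at h
  linarith

lemma int_sq_le {d : ℕ} {a b : ℝ} (hab : a ≤ b) {y : ℝ → Eu d}
    (hy : MemLp y 2 (volume.restrict (Ioc a b))) :
    ‖∫ t in Ioc a b, y t‖ ^ 2 ≤ (b - a) * ∫ t in Ioc a b, ‖y t‖ ^ 2 := by
  rcases hab.eq_or_lt with rfl | hab
  · simp
  have h := avg_le hab hy
  have hp := sub_pos.2 hab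
  have h2 : (∫ t in Ioc a b, y t) = (b - a) • avg y a b := by
    rw [avg, smul_inv_smul₀ hp.ne']
  rw [h2, norm_smul, Real.norm_eq_abs, abs_of_pos hp, mul_pow]
  nlinarith

lemma sub_sq_le {d : ℕ} (u v w : Eu d) : ‖u - w‖ ^ 2 ≤ 2 * ‖u - v‖ ^ 2 + 2 * ‖v - w‖ ^ 2 := by
  have := norm_sub_le_norm_sub_add_norm_sub u v w
  nlinarith [norm_nonneg (u - w), sq_nonneg (‖u - v‖ - ‖v - w‖)]

/-- averages converge -/
lemma avg_conv {d : ℕ} {tf : ℝ} {y : ℝ → Eu d}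
    (hy : MemLp y 2 (volume.restrict (Ioc 0 tf))) {ε : ℝ} (hε : 0 < ε) :
    ∃ M₀ > (0:ℝ), ∀ (N : ℕ) (tP : ℕ → ℝ) (M : ℝ), TPart tf N tP M → M ≤ M₀ →
      ∫ t in Ioc 0 tf, ‖y t - avg y (tP (pidx N tP t)) (tP (pidx N tP t + 1))‖ ^ 2 ≤ ε := by
  have hy' : MemLp y (ENNReal.ofReal 2) (volume.restrict (Ioc 0 tf)) := by simpa using hy
  obtain ⟨g, -, hg, gc, gm⟩ := hy'.exists_hasCompactSupport_integral_rpow_sub_le (by norm_num)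
    (show 0 < ε / 4 by linarith)
  have gm : MemLp g 2 (volume.restrict (Ioc 0 tf)) := by simpa using gm
  have hg : ∫ t in Ioc 0 tf, ‖y t - g t‖ ^ 2 ≤ ε / 4 := by
    simpa only [Real.rpow_ofNat] using hg
  have hu := isCompact_Icc.uniformContinuousOn_of_continuous (s := Icc 0 tf) gc.continuousOn
  obtain ⟨η, hη, hη2⟩ : ∃ η > 0, 2 * (|tf| * η ^ 2) ≤ ε / 2 := by
    refine ⟨Real.sqrt (ε / (4 * (|tf| + 1))), Real.sqrt_pos.2 (by positivity), ?_⟩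
    rw [Real.sq_sqrt (by positivity)]
    have := abs_nonneg tf
    rw [← mul_div_assoc, ← mul_div_assoc, div_le_iff₀ (by positivity)]
    nlinarith
  obtain ⟨δ, hδ, hδ2⟩ := Metric.uniformContinuousOn_iff.1 hu η hη
  refine ⟨δ / 2, by linarith, fun N tP M P hM => ?_⟩
  have m1 := step_memLp tf N tP (fun k => avg y (tP k) (tP (k + 1)))
  have m2 := step_memLp tf N tP (fun k => g (tP k))
  have i1 := memLp_sq (hy.sub m1)
  have i2 := memLp_sq (hy.sub m2)
  have htf : 0 ≤ tf := P.last ▸ (P.mem le_rfl).1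
  calc _ ≤ ∫ t in Ioc 0 tf, ‖y t - g (tP (pidx N tP t))‖ ^ 2 := by
        simp only [Pi.sub_apply] at i1 i2
        rw [P.sum i1, P.sum i2]
        refine Finset.sum_le_sum fun k hk => ?_
        have hk := Finset.mem_range.1 hk
        have e1 : ∀ F : ℕ → Eu d, ∫ t in Ioc (tP k) (tP (k+1)), ‖y t - F (pidx N tP t)‖ ^ 2 =
            ∫ t in Ioc (tP k) (tP (k+1)), ‖y t - F k‖ ^ 2 := fun F =>
          setIntegral_congr_fun measurableSet_Ioc fun t ht => by simp only [P.idx hk ht]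
        rw [e1 (fun k => avg y (tP k) (tP (k + 1))), e1 (fun k => g (tP k))]
        exact avg_min (P.lt k hk) (hy.mono_measure (Measure.restrict_mono (P.sub hk) le_rfl)) _
    _ ≤ ∫ t in Ioc 0 tf, (2 * ‖y t - g t‖ ^ 2 + 2 * η ^ 2) := by
        refine setIntegral_mono_on i2 (((memLp_sq (hy.sub gm)).const_mul 2).add
          (integrable_const _)) measurableSet_Ioc fun t ht => ?_
        refine (sub_sq_le _ (g t) _).trans ?_
        obtain ⟨k, hk, htk⟩ := P.cover ht
        rw [P.idx hk htk]
        have := hδ2 t ⟨ht.1.le, ht.2⟩ (tP k) (P.mem hk.le) (by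
          rw [Real.dist_eq, abs_of_pos (sub_pos.2 htk.1)]
          linarith [P.mesh k hk, htk.2])
        rw [dist_eq_norm] at this
        gcongr
    _ ≤ ε := by
        have i3 : IntegrableOn (fun t => 2 * ‖y t - g t‖ ^ 2) (Ioc 0 tf) :=
          (memLp_sq (hy.sub gm)).const_mul 2
        rw [integral_add i3 (integrable_const _),
          integral_const_mul]
        simp only [integral_const, measureReal_restrict_apply_univ,
          Real.volume_real_Ioc_of_le htf, smul_eq_mul, sub_zero]
        rw [abs_of_nonneg htf] at hη2
        linarith

lemma memLp_sub_sq {d : ℕ} {s : Set ℝ} {y g : ℝ → Eu d} (hy : MemLp y 2 (volume.restrict s))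
    (hg : MemLp g 2 (volume.restrict s)) : IntegrableOn (fun t => ‖y t - g t‖ ^ 2) s :=
  memLp_sq (hy.sub hg)

lemma prim_sub {d : ℕ} {tf : ℝ} {y : ℝ → Eu d} (hy : IntegrableOn y (Ioc 0 tf)) {s t : ℝ}
    (hs : 0 ≤ s) (hst : s ≤ t) (ht : t ≤ tf) :
    (∫ r in Ioc 0 t, y r) = (∫ r in Ioc 0 s, y r) + ∫ r in Ioc s t, y r := by
  rw [← Ioc_union_Ioc_eq_Ioc hs hst, setIntegral_union (Ioc_disjoint_Ioc_of_le le_rfl)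
    measurableSet_Ioc (hy.mono_set (Ioc_subset_Ioc le_rfl (hst.trans ht)))
    (hy.mono_set (Ioc_subset_Ioc hs ht))]

lemma IsW2.sub {d : ℕ} {tf : ℝ} {x x' : ℝ → Eu d} (hx : IsW2 tf x x') {s t : ℝ}
    (hs : 0 ≤ s) (hst : s ≤ t) (ht : t ≤ tf) : x t - x s = ∫ r in Ioc s t, x' r := by
  rw [hx.2.2 t ⟨hs.trans hst, ht⟩, hx.2.2 s ⟨hs, hst.trans ht⟩,
    prim_sub (memLp_int hx.memLp) hs hst ht]
  abel

lemma IsW2.cont {d : ℕ} {tf : ℝ} {x x' : ℝ → Eu d} (hx : IsW2 tf x x') :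
    ContinuousOn x (Icc 0 tf) := by
  have h := intervalIntegral.continuousOn_primitive hx.1
  exact (continuousOn_const.add h).congr fun t ht => hx.2.2 t ht

noncomputable def slp {d : ℕ} (x : ℝ → Eu d) (tP : ℕ → ℝ) (k : ℕ) : Eu d :=
  (tP (k + 1) - tP k)⁻¹ • (x (tP (k + 1)) - x (tP k))

lemma slp_eq {d : ℕ} {tf : ℝ} {x x' : ℝ → Eu d} (hx : IsW2 tf x x')
    {N : ℕ} {tP : ℕ → ℝ} {M : ℝ} (P : TPart tf N tP M) {k : ℕ} (hk : k < N) :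
    slp x tP k = avg x' (tP k) (tP (k + 1)) := by
  rw [slp, avg, hx.sub (P.mem hk.le).1 (P.lt k hk).le (P.mem (show k + 1 ≤ N from hk)).2]

lemma slp_bound {d : ℕ} {tf : ℝ} {x x' y y' : ℝ → Eu d} (hx : IsW2 tf x x') (hy : IsW2 tf y y')
    {N : ℕ} {tP : ℕ → ℝ} {M : ℝ} (P : TPart tf N tP M) :
    ∫ t in Ioc 0 tf, ‖slp y tP (pidx N tP t) - x' t‖ ^ 2 ≤
      2 * (∫ t in Ioc 0 tf, ‖y' t - x' t‖ ^ 2) +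
      2 * ∫ t in Ioc 0 tf, ‖x' t - avg x' (tP (pidx N tP t)) (tP (pidx N tP t + 1))‖ ^ 2 := by
  have m0 := step_memLp tf N tP (slp y tP)
  have m1 := step_memLp tf N tP (fun k => avg x' (tP k) (tP (k + 1)))
  have ix := memLp_int hx.memLp
  have iy := memLp_int hy.memLp
  have i1 := memLp_sub_sq m0 m1
  have i2 := memLp_sub_sq hy.memLp hx.memLp
  have i3 := memLp_sub_sq hx.memLp m1
  calc _ ≤ ∫ t in Ioc 0 tf, (2 * ‖slp y tP (pidx N tP t) -
            avg x' (tP (pidx N tP t)) (tP (pidx N tP t + 1))‖ ^ 2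
          + 2 * ‖x' t - avg x' (tP (pidx N tP t)) (tP (pidx N tP t + 1))‖ ^ 2) := by
        refine setIntegral_mono_on (memLp_sub_sq m0 hx.memLp)
          ((i1.const_mul 2).add (i3.const_mul 2)) measurableSet_Ioc fun t ht => ?_
        rw [norm_sub_rev (x' t)]
        exact sub_sq_le _ _ _
    _ = 2 * (∫ t in Ioc 0 tf, ‖slp y tP (pidx N tP t) -
            avg x' (tP (pidx N tP t)) (tP (pidx N tP t + 1))‖ ^ 2) + 2 *
          ∫ t in Ioc 0 tf, ‖x' t - avg x' (tP (pidx N tP t)) (tP (pidx N tP t + 1))‖ ^ 2 := by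
        rw [integral_add (i1.const_mul 2) (i3.const_mul 2), integral_const_mul,
          integral_const_mul]
    _ ≤ _ := by
        gcongr 2 * ?_ + _
        rw [P.sum i1, P.sum i2]
        refine Finset.sum_le_sum fun k hk => ?_
        have hk := Finset.mem_range.1 hk
        have e : ∫ t in Ioc (tP k) (tP (k+1)), ‖slp y tP (pidx N tP t) -
            avg x' (tP (pidx N tP t)) (tP (pidx N tP t + 1))‖ ^ 2 =
            ∫ t in Ioc (tP k) (tP (k+1)), ‖avg (fun s => y' s - x' s) (tP k) (tP (k + 1))‖ ^ 2 := by
          refine setIntegral_congr_fun measurableSet_Ioc fun t ht => ?_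
          simp only [P.idx hk ht]
          rw [slp_eq hy P hk, avg, avg, avg, ← smul_sub, integral_sub
            (iy.mono_set (P.sub hk)) (ix.mono_set (P.sub hk))]
        rw [e]
        simp only [integral_const, measureReal_restrict_apply_univ,
          Real.volume_real_Ioc_of_le (P.lt k hk).le, smul_eq_mul]
        exact avg_le (P.lt k hk) ((hy.memLp.sub hx.memLp).mono_measure
          (Measure.restrict_mono (P.sub hk) le_rfl))

lemma W2dist_sq {d : ℕ} (tf : ℝ) (x x' y y' : ℝ → Eu d) :
    ‖x 0 - y 0‖ ≤ W2dist tf x x' y y' ∧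
    ∫ s in Ioc (0:ℝ) tf, ‖x' s - y' s‖ ^ 2 ≤ W2dist tf x x' y y' ^ 2 := by
  have h : 0 ≤ ∫ s in Ioc (0:ℝ) tf, ‖x' s - y' s‖ ^ 2 := integral_nonneg fun _ => by positivity
  unfold W2dist
  constructor
  · apply Real.le_sqrt_of_sq_le; linarith
  · rw [Real.sq_sqrt (by positivity)]; linarith [sq_nonneg ‖x 0 - y 0‖]

lemma W2_sup {d : ℕ} {tf : ℝ} {x x' y y' : ℝ → Eu d} (hx : IsW2 tf x x') (hy : IsW2 tf y y')
    {t : ℝ} (ht : t ∈ Icc 0 tf) :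
    ‖x t - y t‖ ≤ (1 + Real.sqrt tf) * W2dist tf x x' y y' := by
  obtain ⟨h1, h2⟩ := W2dist_sq tf x x' y y'
  have hD : 0 ≤ W2dist tf x x' y y' := Real.sqrt_nonneg _
  have hss : Ioc 0 t ⊆ Ioc 0 tf := Ioc_subset_Ioc le_rfl ht.2
  have ix := (memLp_int hx.memLp).mono_set hss
  have iy := (memLp_int hy.memLp).mono_set hss
  have e : x t - y t = (x 0 - y 0) + ∫ s in Ioc 0 t, (x' s - y' s) := by
    rw [hx.2.2 t ht, hy.2.2 t ht, integral_sub ix iy]; abel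
  have h3 := int_sq_le ht.1 ((hx.memLp.sub hy.memLp).mono_measure
          (Measure.restrict_mono hss le_rfl))
  have h4 : ∫ s in Ioc 0 t, ‖x' s - y' s‖ ^ 2 ≤ ∫ s in Ioc 0 tf, ‖x' s - y' s‖ ^ 2 :=
    setIntegral_mono_set (memLp_sub_sq hx.memLp hy.memLp)
      (ae_of_all _ fun _ => by positivity) hss.eventuallyLE
  simp only [Pi.sub_apply, sub_zero] at h3
  have htf : 0 ≤ tf := ht.1.trans ht.2
  have h5 : ‖∫ s in Ioc 0 t, (x' s - y' s)‖ ≤ Real.sqrt tf * W2dist tf x x' y y' := by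
    refine abs_le_of_sq_le_sq' ?_ (by positivity) |>.2
    rw [mul_pow, Real.sq_sqrt htf]
    calc _ ≤ _ := h3
      _ ≤ tf * _ := mul_le_mul ht.2 (h4.trans h2) (integral_nonneg fun _ => by positivity) htf
  rw [e]
  refine (norm_add_le _ _).trans ?_
  linarith

/-- Gronwall-type estimate for the Euler scheme. -/
lemma euler_gronwall {d : ℕ} {tf : ℝ} {N : ℕ} {tP : ℕ → ℝ} {M : ℝ} (P : TPart tf N tP M)
    {zt z H : ℝ → Eu d} {v : ℕ → Eu d} {z0 : Eu d} {L η : ℝ} (hL : 0 ≤ L) (hη : 0 ≤ η)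
    (hzt : ∀ k < N, ∀ s ∈ Ioc (tP k) (tP (k + 1)), zt s = zt (tP k) + (s - tP k) • v k)
    (hH : IntegrableOn H (Ioc 0 tf))
    (hz : ∀ t ∈ Icc (0:ℝ) tf, z t = z0 + ∫ s in Ioc (0:ℝ) t, H s)
    (hv : ∀ k < N, ∀ s ∈ Ioc (tP k) (tP (k + 1)),
      ‖v k - H s‖ ≤ L * ‖zt (tP k) - z (tP k)‖ + η) :
    ∀ t ∈ Icc 0 tf, ‖zt t - z t‖ ≤ (‖zt 0 - z0‖ + η * t) * Real.exp (L * t) := by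
  set e0 := ‖zt 0 - z0‖ with he0
  have he0' : 0 ≤ e0 := norm_nonneg _
  have step : ∀ k < N, ‖zt (tP k) - z (tP k)‖ ≤ (e0 + η * tP k) * Real.exp (L * tP k) →
      ∀ s ∈ Ioc (tP k) (tP (k + 1)), ‖zt s - z s‖ ≤ (e0 + η * s) * Real.exp (L * s) := by
    intro k hk ih s hs
    have hs1 := P.sub hk hs
    have hk0 := P.mem hk.le
    have hsub : Ioc (tP k) s ⊆ Ioc (tP k) (tP (k + 1)) := Ioc_subset_Ioc le_rfl hs.2
    have e : zt s - z s = (zt (tP k) - z (tP k)) + ∫ r in Ioc (tP k) s, (v k - H r) := by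
      rw [integral_sub (integrable_const _) (hH.mono_set (hsub.trans (P.sub hk))), hzt k hk s hs,
        hz s ⟨hs1.1.le, hs1.2⟩, hz _ hk0, prim_sub hH hk0.1 hs.1.le hs1.2]
      simp only [integral_const, measureReal_restrict_apply_univ,
          Real.volume_real_Ioc_of_le hs.1.le]
      abel
    have hb : ‖∫ r in Ioc (tP k) s, (v k - H r)‖ ≤
        (L * ‖zt (tP k) - z (tP k)‖ + η) * (s - tP k) := by
      have := norm_setIntegral_le_of_norm_le_const (μ := volume) (s := Ioc (tP k) s)
        (f := fun r => v k - H r) measure_Ioc_lt_top (fun r hr => hv k hk r (hsub hr))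
      rwa [Real.volume_real_Ioc_of_le hs.1.le] at this
    have hδ : 0 ≤ s - tP k := sub_nonneg.2 hs.1.le
    have hE : 1 + L * (s - tP k) ≤ Real.exp (L * (s - tP k)) := by
      linarith [Real.add_one_le_exp (L * (s - tP k))]
    have hE1 : 1 ≤ Real.exp (L * s) := Real.one_le_exp (mul_nonneg hL hs1.1.le)
    have hsplit : Real.exp (L * s) = Real.exp (L * tP k) * Real.exp (L * (s - tP k)) := by
      rw [← Real.exp_add]; ring_nf
    have hA : 0 ≤ (e0 + η * tP k) * Real.exp (L * tP k) := by
      have := hk0.1; positivity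
    rw [e]
    calc _ ≤ _ := norm_add_le _ _
      _ ≤ ‖zt (tP k) - z (tP k)‖ * (1 + L * (s - tP k)) + η * (s - tP k) := by linarith
      _ ≤ ((e0 + η * tP k) * Real.exp (L * tP k)) * Real.exp (L * (s - tP k))
          + η * (s - tP k) * Real.exp (L * s) := by
        refine add_le_add (mul_le_mul ih hE (by positivity) hA) ?_
        exact le_mul_of_one_le_right (by positivity) hE1
      _ = _ := by rw [mul_assoc, ← hsplit]; ring
  have z_zero : ∀ (_ : 0 ≤ tf), z 0 = z0 := by
    intro h; rw [hz 0 ⟨le_rfl, h⟩]; simp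
  have nodes : ∀ k ≤ N, ‖zt (tP k) - z (tP k)‖ ≤ (e0 + η * tP k) * Real.exp (L * tP k) := by
    intro k
    induction k with
    | zero =>
      intro _
      rw [P.zero, z_zero (P.last ▸ (P.mem le_rfl).1)]; simp [he0]
    | succ k ih =>
      intro hk
      exact step k hk (ih (by omega)) _ ⟨P.lt k hk, le_rfl⟩
  intro t ht
  rcases ht.1.eq_or_lt with rfl | h0
  · have := nodes 0 (Nat.zero_le _)
    rwa [P.zero] at this
  · obtain ⟨k, hk, hkt⟩ := P.cover ⟨h0, ht.2⟩
    exact step k hk (nodes k hk.le) t hkt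

lemma sq_conv {d : ℕ} {s : Set ℝ} {l : Filter ℕ} {w : ℕ → ℝ → Eu d} {u : ℝ → Eu d}
    (hw : ∀ i, MemLp (w i) 2 (volume.restrict s)) (hu : MemLp u 2 (volume.restrict s))
    (hc : Tendsto (fun i => ∫ t in s, ‖w i t - u t‖ ^ 2) l (nhds 0)) :
    Tendsto (fun i => ∫ t in s, ‖w i t‖ ^ 2) l (nhds (∫ t in s, ‖u t‖ ^ 2)) := by
  have iu := memLp_sq hu
  have hU : 0 ≤ ∫ t in s, ‖u t‖ ^ 2 := integral_nonneg fun _ => by positivity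
  set U := ∫ t in s, ‖u t‖ ^ 2
  have key : ∀ r > 0, ∀ i, |(∫ t in s, ‖w i t‖ ^ 2) - U| ≤
      (1 + 1 / r) * (∫ t in s, ‖w i t - u t‖ ^ 2) + r * U := by
    intro r hr i
    have iw := memLp_sq (hw i)
    have id := memLp_sub_sq (hw i) hu
    rw [← integral_sub iw iu, ← integral_const_mul, ← integral_const_mul,
      ← integral_add (id.const_mul _) (iu.const_mul _)]
    refine (abs_integral_le_integral_abs).trans ?_
    refine integral_mono (iw.sub iu).abs ((id.const_mul _).add (iu.const_mul _)) fun t => ?_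
    have h1 : |‖w i t‖ - ‖u t‖| ≤ ‖w i t - u t‖ := abs_norm_sub_norm_le _ _
    set a := ‖w i t‖
    set b := ‖u t‖
    set c := ‖w i t - u t‖
    have hb : 0 ≤ b := norm_nonneg _
    have ha : 0 ≤ a := norm_nonneg _
    have hcn : 0 ≤ c := norm_nonneg _
    have h2 : |a ^ 2 - b ^ 2| ≤ c ^ 2 + 2 * c * b := by
      obtain ⟨h3, h4⟩ := abs_le.1 h1
      rw [abs_le]; constructor <;> nlinarith
    have h5 : 2 * c * b ≤ 1 / r * c ^ 2 + r * b ^ 2 := by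
      have : 0 ≤ 1 / r * (c - r * b) ^ 2 := by positivity
      have e : 1 / r * (c - r * b) ^ 2 = 1 / r * c ^ 2 + r * b ^ 2 - 2 * c * b := by
        field_simp; ring
      linarith
    show |a ^ 2 - b ^ 2| ≤ (1 + 1 / r) * c ^ 2 + r * b ^ 2
    linarith
  rw [Metric.tendsto_nhds]
  intro ε hε
  set r := ε / (2 * (U + 1)) with hr
  have hr0 : 0 < r := by positivity
  have hrU : r * U < ε / 2 := by
    rw [hr, div_mul_eq_mul_div, div_lt_iff₀ (by positivity)]; nlinarith
  have := (hc.const_mul (1 + 1 / r))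
  rw [mul_zero] at this
  filter_upwards [this.eventually_lt_const (show 0 < ε / 2 by linarith)] with i hi
  rw [Real.dist_eq]
  linarith [key r hr0 i]

lemma osc_conv {d : ℕ} {tf : ℝ} {l : Filter ℕ} {N : ℕ → ℕ} {tP : ℕ → ℕ → ℝ} {M : ℕ → ℝ}
    (hP : ∀ i, TPart tf (N i) (tP i) (M i)) (hM : Tendsto M l (nhds 0))
    {y : ℝ → Eu d} (hy : ContinuousOn y (Icc 0 tf)) {ε : ℝ} (hε : 0 < ε) :
    ∀ᶠ i in l, ∀ k < N i, ∀ t ∈ Ioc (tP i k) (tP i (k + 1)), ‖y (tP i k) - y t‖ ≤ ε := by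
  have hu := isCompact_Icc.uniformContinuousOn_of_continuous hy
  obtain ⟨δ, hδ, hδ2⟩ := Metric.uniformContinuousOn_iff.1 hu ε hε
  filter_upwards [hM.eventually_lt_const hδ] with i hi k hk t ht
  have ht1 := (hP i).sub hk ht
  rw [← dist_eq_norm]
  refine (hδ2 _ ((hP i).mem hk.le) t ⟨ht1.1.le, ht1.2⟩ ?_).le
  rw [dist_comm, Real.dist_eq, abs_of_pos (sub_pos.2 ht.1)]
  linarith [(hP i).mesh k hk, ht.2]

lemma cont_memLp {d : ℕ} {tf : ℝ} {y : ℝ → Eu d} (hy : ContinuousOn y (Icc 0 tf)) :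
    MemLp y 2 (volume.restrict (Ioc 0 tf)) := by
  obtain ⟨C, hC⟩ := isCompact_Icc.exists_bound_of_continuousOn hy
  refine MemLp.of_bound ((hy.mono Ioc_subset_Icc_self).aestronglyMeasurable measurableSet_Ioc) C ?_
  filter_upwards [ae_restrict_mem measurableSet_Ioc] with t ht
  exact hC t (Ioc_subset_Icc_self ht)

lemma comp_cont {n q m d : ℕ} {tf : ℝ} {f : ℝ → Eu n → Eu q → Eu m → Eu d}
    (hfc : Continuous fun p : ℝ × Eu n × Eu q × Eu m => f p.1 p.2.1 p.2.2.1 p.2.2.2)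
    {x : ℝ → Eu n} {z : ℝ → Eu q} (hx : ContinuousOn x (Icc 0 tf)) (hz : ContinuousOn z (Icc 0 tf))
    (θ : Eu m) : ContinuousOn (fun t => f t (x t) (z t) θ) (Icc 0 tf) :=
  hfc.comp_continuousOn (continuousOn_id.prodMk (hx.prodMk (hz.prodMk continuousOn_const)))

/-- Uniform continuity. -/
def UC {n q m d : ℕ} (tf : ℝ) (S : Set (Eu m)) (f : ℝ → Eu n → Eu q → Eu m → Eu d) : Prop :=
  ∀ η > (0:ℝ), ∃ ε > (0:ℝ), ∀ t ∈ Icc (0:ℝ) tf, ∀ t' ∈ Icc (0:ℝ) tf,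
      ∀ (a a' : Eu n) (b b' : Eu q) (c c' : Eu m), c ∈ S → c' ∈ S →
      |t - t'| ≤ ε → ‖a - a'‖ ≤ ε → ‖b - b'‖ ≤ ε → ‖c - c'‖ ≤ ε →
      ‖f t a b c - f t' a' b' c'‖ ≤ η

lemma core {n q m : ℕ} {tf : ℝ} (htf : 0 < tf) {l : Filter ℕ}
    {N : ℕ → ℕ} {tP : ℕ → ℕ → ℝ} {M : ℕ → ℝ}
    (hP : ∀ i, TPart tf (N i) (tP i) (M i)) (hM : Tendsto M l (nhds 0))
    {S : Set (Eu m)} {f : ℝ → Eu n → Eu q → Eu m → Eu n} {h : ℝ → Eu n → Eu q → Eu m → Eu q}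
    (hfc : Continuous fun p : ℝ × Eu n × Eu q × Eu m => f p.1 p.2.1 p.2.2.1 p.2.2.2)
    (hhc : Continuous fun p : ℝ × Eu n × Eu q × Eu m => h p.1 p.2.1 p.2.2.1 p.2.2.2)
    (hfU : UC tf S f) (hhU : UC tf S h)
    {θ : Eu m} (hθ : θ ∈ S) {L : ℝ} (hL : 0 < L)
    (hhLip : ∀ t ∈ Icc (0:ℝ) tf, ∀ (a a' : Eu n) (b b' : Eu q),
      ‖h t a b θ - h t a' b' θ‖ ≤ L * (‖a - a'‖ + ‖b - b'‖))
    (G : Eu n ≃L[ℝ] Eu n)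
    {xi x'i : ℕ → ℝ → Eu n} {ζi : ℕ → Eu q} {ϑi : ℕ → Eu m}
    {x x' : ℝ → Eu n} {z0 : Eu q}
    (hxi : ∀ i, IsW2 tf (xi i) (x'i i)) (hx : IsW2 tf x x')
    (hd : Tendsto (fun i => W2dist tf (xi i) (x'i i) x x') l (nhds 0))
    (hζ : Tendsto (fun i => ‖ζi i - z0‖) l (nhds 0))
    (hϑ : Tendsto (fun i => ‖ϑi i - θ‖) l (nhds 0))
    {zt : ℕ → ℝ → Eu q}
    (hzt : ∀ᶠ i in l, ϑi i ∈ S ∧ IsEulerPath (N i) (tP i) h (xi i) (ζi i) (ϑi i) (zt i))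
    {z : ℝ → Eu q} (hzc : ContinuousOn z (Icc 0 tf))
    (hz : ∀ t ∈ Icc (0:ℝ) tf, z t = z0 + ∫ s in Ioc (0:ℝ) t, h s (x s) (z s) θ) :
    (∀ ε > 0, ∀ᶠ i in l, ∀ t ∈ Icc 0 tf, ‖xi i t - x t‖ ≤ ε ∧ ‖zt i t - z t‖ ≤ ε) ∧
    Tendsto (fun i => eulerSum (N i) (tP i) f (fun v => G.symm v) (xi i) (zt i) (ϑi i)) l
      (nhds (∫ t in Ioc (0:ℝ) tf, ‖G.symm (x' t - f t (x t) (z t) θ)‖ ^ 2)) := by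
  have supx : ∀ ε > 0, ∀ᶠ i in l, ∀ t ∈ Icc 0 tf, ‖xi i t - x t‖ ≤ ε := by
    intro ε hε
    have := hd.const_mul (1 + Real.sqrt tf)
    rw [mul_zero] at this
    filter_upwards [this.eventually_lt_const hε] with i hi t ht
    exact (W2_sup (hxi i) hx ht).trans hi.le
  -- the x argument at the left node
  have nodex : ∀ ε > 0, ∀ᶠ i in l, ∀ k < N i, ∀ t ∈ Ioc (tP i k) (tP i (k + 1)),
      ‖xi i (tP i k) - x t‖ ≤ ε := by
    intro ε hε
    filter_upwards [supx (ε / 2) (by linarith),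
      osc_conv hP hM hx.cont (show 0 < ε / 2 by linarith)] with i h1 h2 k hk t ht
    have := norm_sub_le_norm_sub_add_norm_sub (xi i (tP i k)) (x (tP i k)) (x t)
    linarith [h1 _ ((hP i).mem hk.le), h2 k hk t ht]
  have supz : ∀ ε > 0, ∀ᶠ i in l, ∀ t ∈ Icc 0 tf, ‖zt i t - z t‖ ≤ ε := by
    intro ε hε
    set η := ε / ((1 + tf) * Real.exp (L * tf)) with hη
    have hη0 : 0 < η := by positivity
    obtain ⟨δ, hδ, hU⟩ := hhU (η / 2) (by linarith)
    filter_upwards [hzt, hM.eventually_lt_const hδ, nodex δ hδ,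
      hϑ.eventually_lt_const hδ, hζ.eventually_lt_const hη0,
      osc_conv hP hM hzc (show 0 < η / (2 * L) by positivity)] with i h1 h2 h3 h4 h5 h6
    obtain ⟨hS, hE0, hE⟩ := h1
    have P := hP i
    have hg := euler_gronwall P (z0 := z0) (L := L) (η := η) hL.le hη0.le hE
      (memLp_int (cont_memLp (comp_cont hhc hx.cont hzc θ))) hz (by
        intro k hk s hs
        have hs1 := Ioc_subset_Icc_self (P.sub hk hs)
        have a1 := hU (tP i k) (P.mem hk.le) s hs1 (xi i (tP i k)) (x s)
          (zt i (tP i k)) (zt i (tP i k)) (ϑi i) θ hS hθ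
          (by rw [abs_sub_comm, abs_of_pos (sub_pos.2 hs.1)]; linarith [P.mesh k hk, hs.2])
          (h3 k hk s hs) (by simpa using hδ.le) h4.le
        have a2 := hhLip s hs1 (x s) (x s) (zt i (tP i k)) (z s)
        have a3 := norm_sub_le_norm_sub_add_norm_sub (zt i (tP i k)) (z (tP i k)) (z s)
        have a4 := h6 k hk s hs
        have a5 : L * ‖zt i (tP i k) - z s‖ ≤ L * ‖zt i (tP i k) - z (tP i k)‖ + η / 2 := by
          have : L * (η / (2 * L)) = η / 2 := by field_simp
          nlinarith
        have a6 := norm_sub_le_norm_sub_add_norm_sub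
          (h (tP i k) (xi i (tP i k)) (zt i (tP i k)) (ϑi i)) (h s (x s) (zt i (tP i k)) θ)
          (h s (x s) (z s) θ)
        simp only [sub_self, norm_zero, zero_add] at a2
        linarith)
    intro t ht
    refine (hg t ht).trans ?_
    rw [hE0]
    have e : ε = (η + η * tf) * Real.exp (L * tf) := by rw [hη]; field_simp
    rw [e]
    have h7 : 0 ≤ t := ht.1
    have h8 : t ≤ tf := ht.2
    gcongr
  refine ⟨fun ε hε => ?_, ?_⟩
  · filter_upwards [supx ε hε, supz ε hε] with i h1 h2 t ht using ⟨h1 t ht, h2 t ht⟩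
  have nodez : ∀ ε > 0, ∀ᶠ i in l, ∀ k < N i, ∀ t ∈ Ioc (tP i k) (tP i (k + 1)),
      ‖zt i (tP i k) - z t‖ ≤ ε := by
    intro ε hε
    filter_upwards [supz (ε / 2) (by linarith),
      osc_conv hP hM hzc (show 0 < ε / 2 by linarith)] with i h1 h2 k hk t ht
    have := norm_sub_le_norm_sub_add_norm_sub (zt i (tP i k)) (z (tP i k)) (z t)
    linarith [h1 _ ((hP i).mem hk.le), h2 k hk t ht]
  have nodef : ∀ η > 0, ∀ᶠ i in l, ∀ k < N i, ∀ t ∈ Ioc (tP i k) (tP i (k + 1)),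
      ‖f (tP i k) (xi i (tP i k)) (zt i (tP i k)) (ϑi i) - f t (x t) (z t) θ‖ ≤ η := by
    intro η hη
    obtain ⟨δ, hδ, hU⟩ := hfU η hη
    filter_upwards [hzt, hM.eventually_lt_const hδ, nodex δ hδ, nodez δ hδ,
      hϑ.eventually_lt_const hδ] with i h1 h2 h3 h3' h4 k hk s hs
    have P := hP i
    exact hU (tP i k) (P.mem hk.le) s (Ioc_subset_Icc_self (P.sub hk hs)) _ _ _ _ _ _ h1.1 hθ
          (by rw [abs_sub_comm, abs_of_pos (sub_pos.2 hs.1)]; linarith [P.mesh k hk, hs.2])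
          (h3 k hk s hs) (h3' k hk s hs) h4.le
  set F : ℕ → ℕ → Eu n := fun i k => G.symm (slp (xi i) (tP i) k -
    f (tP i k) (xi i (tP i k)) (zt i (tP i k)) (ϑi i)) with hF
  have hw := fun i => step_memLp tf (N i) (tP i) (F i)
  have mf := cont_memLp (comp_cont hfc hx.cont hzc θ)
  have hu : MemLp (fun t => G.symm (x' t - f t (x t) (z t) θ)) 2 (volume.restrict (Ioc 0 tf)) :=
    (G.symm : Eu n →L[ℝ] Eu n).comp_memLp' (hx.memLp.sub mf)
  have hsum : ∀ i, eulerSum (N i) (tP i) f (fun v => G.symm v) (xi i) (zt i) (ϑi i) =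
      ∫ t in Ioc 0 tf, ‖F i (pidx (N i) (tP i) t)‖ ^ 2 := by
    intro i
    have P := hP i
    rw [P.sum (memLp_sq (hw i))]
    unfold eulerSum
    refine Finset.sum_congr rfl fun k hk => ?_
    have hk := Finset.mem_range.1 hk
    have e : ∫ t in Ioc (tP i k) (tP i (k+1)), ‖F i (pidx (N i) (tP i) t)‖ ^ 2 =
        ∫ t in Ioc (tP i k) (tP i (k+1)), ‖F i k‖ ^ 2 :=
      setIntegral_congr_fun measurableSet_Ioc fun t ht => by simp only [P.idx hk ht]
    rw [e]
    simp only [integral_const, measureReal_restrict_apply_univ,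
          Real.volume_real_Ioc_of_le (P.lt k hk).le, smul_eq_mul]
    rfl
  simp_rw [hsum]
  refine sq_conv hw hu ?_
  set C := ‖(G.symm : Eu n →L[ℝ] Eu n)‖ with hC
  have hC0 : 0 ≤ C := norm_nonneg _
  -- convergence of the slopes
  have hsl : Tendsto (fun i => ∫ t in Ioc 0 tf,
      ‖slp (xi i) (tP i) (pidx (N i) (tP i) t) - x' t‖ ^ 2) l (nhds 0) := by
    rw [Metric.tendsto_nhds]
    intro ε hε
    obtain ⟨M₀, hM₀, hav⟩ := avg_conv hx.memLp (show 0 < ε / 8 by linarith)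
    have hd2 := (hd.pow 2)
    rw [zero_pow two_ne_zero] at hd2
    filter_upwards [hM.eventually_lt_const hM₀,
      hd2.eventually_lt_const (show 0 < ε / 8 by linarith)] with i h1 h2
    rw [Real.dist_eq, sub_zero, abs_of_nonneg (integral_nonneg fun _ => by positivity)]
    linarith [slp_bound hx (hxi i) (hP i), hav _ _ _ (hP i) h1.le,
      (W2dist_sq tf (xi i) (x'i i) x x').2]
  have bound : ∀ η > 0, ∀ᶠ i in l, ∫ t in Ioc 0 tf,
      ‖F i (pidx (N i) (tP i) t) - G.symm (x' t - f t (x t) (z t) θ)‖ ^ 2 ≤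
      (2 * C ^ 2) * (∫ t in Ioc 0 tf,
      ‖slp (xi i) (tP i) (pidx (N i) (tP i) t) - x' t‖ ^ 2) + 2 * C ^ 2 * η ^ 2 * tf := by
    intro η hη
    filter_upwards [nodef η hη] with i hi
    have P := hP i
    have is := memLp_sub_sq (step_memLp tf (N i) (tP i) (slp (xi i) (tP i))) hx.memLp
    calc _ ≤ ∫ t in Ioc 0 tf, ((2 * C ^ 2) *
          ‖slp (xi i) (tP i) (pidx (N i) (tP i) t) - x' t‖ ^ 2 + 2 * C ^ 2 * η ^ 2) := by
          refine setIntegral_mono_on (memLp_sub_sq (hw i) hu)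
            ((is.const_mul _).add (integrable_const _)) measurableSet_Ioc fun t ht => ?_
          obtain ⟨k, hk, hkt⟩ := P.cover ht
          have h1 := hi k hk t hkt
          rw [P.idx hk hkt, hF]
          simp only
          rw [← map_sub]
          have h2 := (G.symm : Eu n →L[ℝ] Eu n).le_opNorm (slp (xi i) (tP i) k -
            f (tP i k) (xi i (tP i k)) (zt i (tP i k)) (ϑi i) - (x' t - f t (x t) (z t) θ))
          rw [← hC, sub_sub_sub_comm] at h2
          rw [sub_sub_sub_comm]
          have h3 := norm_sub_le (slp (xi i) (tP i) k - x' t)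
            (f (tP i k) (xi i (tP i k)) (zt i (tP i k)) (ϑi i) - f t (x t) (z t) θ)
          have h4 : ‖(slp (xi i) (tP i) k - x' t) -
            (f (tP i k) (xi i (tP i k)) (zt i (tP i k)) (ϑi i) - f t (x t) (z t) θ)‖ ≤
            ‖slp (xi i) (tP i) k - x' t‖ + η := by linarith
          have h5 := h2.trans (mul_le_mul_of_nonneg_left h4 hC0)
          have h6 := pow_le_pow_left₀ (norm_nonneg _) h5 2
          refine h6.trans ?_
          have : 0 ≤ C ^ 2 * (‖slp (xi i) (tP i) k - x' t‖ - η) ^ 2 := by positivity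
          nlinarith
      _ = _ := by
          rw [integral_add (is.const_mul _) (integrable_const _), integral_const_mul]
          simp only [integral_const, measureReal_restrict_apply_univ,
            Real.volume_real_Ioc_of_le htf.le, smul_eq_mul, sub_zero]
          ring
  rw [Metric.tendsto_nhds]
  intro ε hε
  set η := Real.sqrt (ε / (4 * (C ^ 2 + 1) * tf)) with hη
  have hη0 : 0 < η := Real.sqrt_pos.2 (by positivity)
  have hη2 : 2 * C ^ 2 * η ^ 2 * tf ≤ ε / 2 := by
    rw [hη, Real.sq_sqrt (by positivity)]
    have : 2 * C ^ 2 * (ε / (4 * (C ^ 2 + 1) * tf)) * tf = (C ^ 2 / (C ^ 2 + 1)) * (ε / 2) := by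
      field_simp; ring
    rw [this]
    have : C ^ 2 / (C ^ 2 + 1) ≤ 1 := by rw [div_le_one (by positivity)]; linarith
    nlinarith
  have h1 := hsl.const_mul (2 * C ^ 2)
  rw [mul_zero] at h1
  filter_upwards [bound η hη0, h1.eventually_lt_const (show 0 < ε / 2 by linarith)] with i h2 h3
  rw [Real.dist_eq, sub_zero, abs_of_nonneg (integral_nonneg fun _ => by positivity)]
  linarith

lemma w2_of_prim {d : ℕ} {tf : ℝ} {y : ℝ → Eu d} (hy : MemLp y 2 (volume.restrict (Ioc 0 tf)))
    (c : Eu d) : IsW2 tf (fun t => c + ∫ s in Ioc (0:ℝ) t, y s) y := by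
  refine ⟨(integrableOn_Icc_iff_integrableOn_Ioc (by simp)).2 (memLp_int hy),
    (integrableOn_Icc_iff_integrableOn_Ioc (by simp)).2 (memLp_sq hy), fun t _ => ?_⟩
  simp

lemma euler_cont {n q m : ℕ} {tf : ℝ} {N : ℕ} {tP : ℕ → ℝ} {M : ℝ} (P : TPart tf N tP M)
    {h : ℝ → Eu n → Eu q → Eu m → Eu q} {xt : ℝ → Eu n} {ζ : Eu q} {ϑ : Eu m} {zt : ℝ → Eu q}
    (hz : IsEulerPath N tP h xt ζ ϑ zt) : ContinuousOn zt (Icc 0 tf) := by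
  set v : ℕ → Eu q := fun k => h (tP k) (xt (tP k)) (zt (tP k)) ϑ with hv
  have hm := step_memLp tf N tP v
  have hw := w2_of_prim hm ζ
  have hg := euler_gronwall P (z0 := ζ) (L := 0) (η := 0) le_rfl le_rfl hz.2
      (memLp_int hm) (z := fun t => ζ + ∫ s in Ioc (0:ℝ) t, v (pidx N tP s)) (fun t _ => rfl) (by
        intro k hk s hs
        rw [P.idx hk hs]; simp [hv])
  refine hw.cont.congr fun t ht => ?_
  have := hg t ht
  rw [hz.1] at this
  simp only [sub_self, norm_zero, zero_mul, add_zero] at this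
  exact sub_eq_zero.1 (norm_le_zero_iff.1 this)

lemma pl_interp {d : ℕ} {tf : ℝ} {N : ℕ} {tP : ℕ → ℝ} {M : ℝ} (P : TPart tf N tP M)
    (F : ℕ → Eu d) (c : Eu d) :
    IsPL tf N tP (fun t => c + ∫ s in Ioc (0:ℝ) t, F (pidx N tP s)) := by
  have hm := step_memLp tf N tP F
  refine ⟨(w2_of_prim hm c).cont, fun k hk => ?_⟩
  refine ⟨c + (∫ s in Ioc (0:ℝ) (tP k), F (pidx N tP s)) - tP k • F k, F k, fun s hs => ?_⟩
  have hk0 := P.mem hk.le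
  have hk1 := P.mem (show k + 1 ≤ N from hk)
  have e : ∫ r in Ioc (tP k) s, F (pidx N tP r) = ∫ r in Ioc (tP k) s, F k :=
    setIntegral_congr_fun measurableSet_Ioc fun r hr => by
      simp only [P.idx hk ⟨hr.1, hr.2.trans hs.2⟩]
  simp only
  rw [prim_sub (memLp_int hm) hk0.1 hs.1 (hs.2.trans hk1.2), e]
  simp only [integral_const, measureReal_restrict_apply_univ, Real.volume_real_Ioc_of_le hs.1,
    sub_smul]
  abel

lemma elog_ne_top (r : ℝ) : elog r ≠ ⊤ := by
  unfold elog; split_ifs <;> simp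

lemma elog_tendsto {l : Filter ℕ} {a : ℕ → ℝ} {b : ℝ} (hb : 0 ≤ b) (ha : Tendsto a l (nhds b)) :
    Tendsto (fun i => elog (a i)) l (nhds (elog b)) := by
  rcases hb.eq_or_lt with rfl | hb
  · have : elog 0 = ⊥ := by simp [elog]
    rw [this, EReal.tendsto_nhds_bot_iff_real]
    intro y
    filter_upwards [ha.eventually_lt_const (Real.exp_pos y)] with i hi
    unfold elog
    split_ifs with h0
    · exact EReal.bot_lt_coe y
    · exact EReal.coe_lt_coe_iff.2 ((Real.log_lt_iff_lt_exp (not_le.1 h0)).2 hi)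
  · have e : elog b = ((Real.log b : ℝ) : EReal) := by simp [elog, hb]
    rw [e]
    have h1 := (continuous_coe_real_ereal.tendsto _).comp
      ((Real.continuousAt_log hb.ne').tendsto.comp ha)
    refine h1.congr' ?_
    filter_upwards [ha.eventually_const_lt hb] with i hi
    simp [elog, hi]

lemma val_tendsto {l : Filter ℕ} {a b c : ℕ → ℝ} {a0 b0 c0 : ℝ} (ha0 : 0 ≤ a0) (hb0 : 0 ≤ b0)
    (ha : Tendsto a l (nhds a0)) (hb : Tendsto b l (nhds b0)) (hc : Tendsto c l (nhds c0)) :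
    Tendsto (fun i => elog (a i) + elog (b i) - (((1:ℝ) / 2 * c i : ℝ) : EReal)) l
      (nhds (elog a0 + elog b0 - (((1:ℝ) / 2 * c0 : ℝ) : EReal))) := by
  have h1 : Tendsto (fun i => elog (a i) + elog (b i)) l (nhds (elog a0 + elog b0)) :=
    (EReal.continuousAt_add (p := (elog a0, elog b0)) (Or.inl (elog_ne_top _))
      (Or.inr (elog_ne_top _))).tendsto.comp ((elog_tendsto ha0 ha).prodMk_nhds (elog_tendsto hb0 hb))
  have h2 : Tendsto (fun i => ((-((1:ℝ) / 2 * c i) : ℝ) : EReal)) l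
      (nhds ((-((1:ℝ) / 2 * c0) : ℝ) : EReal)) :=
    (continuous_coe_real_ereal.tendsto _).comp (hc.const_mul _).neg
  have h3 := (EReal.continuousAt_add (p := (elog a0 + elog b0, ((-((1:ℝ) / 2 * c0) : ℝ) : EReal)))
    (Or.inr (EReal.coe_ne_bot _)) (Or.inr (EReal.coe_ne_top _))).tendsto.comp
      (h1.prodMk_nhds h2)
  simpa only [sub_eq_add_neg, EReal.coe_neg, Function.comp_def] using h3

lemma uc_of_mod {n q m d : ℕ} {tf : ℝ} {S : Set (Eu m)} {f : ℝ → Eu n → Eu q → Eu m → Eu d}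
    {ρ ρ' : ℝ → ℝ} (hρ : Tendsto (fun ε => ρ ε + ρ' ε) (nhdsWithin 0 (Ioi 0)) (nhds 0))
    (hρ' : ∀ ε > 0, 0 ≤ ρ' ε)
    (hfu : ∀ ε > (0:ℝ), ∀ t ∈ Icc (0:ℝ) tf, ∀ t' ∈ Icc (0:ℝ) tf,
      ∀ (a a' : Eu n) (b b' : Eu q) (c c' : Eu m), c ∈ S → c' ∈ S →
      |t - t'| ≤ ε → ‖a - a'‖ ≤ ε → ‖b - b'‖ ≤ ε → ‖c - c'‖ ≤ ε →
      ‖f t a b c - f t' a' b' c'‖ ≤ ρ ε) : UC tf S f := by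
  intro η hη
  obtain ⟨ε, h1, h2⟩ := ((hρ.eventually_lt_const hη).and self_mem_nhdsWithin).exists
  have h2 : 0 < ε := h2
  refine ⟨ε, h2, fun t ht t' ht' a a' b b' c c' hc hc' h3 h4 h5 h6 => ?_⟩
  exact (hfu ε h2 t ht t' ht' a a' b b' c c' hc hc' h3 h4 h5 h6).trans
    (by linarith [hρ' ε h2])

/-- Theorem 3.7: the Euler-discretized joint state-path and parameter
log-posteriors `ℓ̃_i` hypo-converge, on `𝒵 = W²_n × ℝ^q × ℝ^m` with the `W²`-norm
topology on the first factor, to the energy log-posterior `ℓ_e`.  Hypo-convergence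
is spelled out sequentially: (a) `limsup ℓ̃_i(ζ_i) ≤ ℓ_e(ζ)` along every convergent
sequence `ζ_i → ζ` in `𝒵`, and (b) every `ζ ∈ 𝒵` is the limit of a sequence with
`liminf ℓ̃_i(ζ_i) ≥ ℓ_e(ζ)`. -/
theorem stmt8 {n q m : ℕ} (tf : ℝ) (htf : 0 < tf)
    -- nested partitions with vanishing mesh
    (N : ℕ → ℕ) (hN1 : ∀ i, 1 ≤ N i) (tP : ℕ → ℕ → ℝ)
    (htP0 : ∀ i, tP i 0 = 0) (htPN : ∀ i, tP i (N i) = tf)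
    (htPmono : ∀ i, ∀ k < N i, tP i k < tP i (k + 1))
    (hnested : ∀ i, ∀ k ≤ N i, ∃ k' ≤ N (i + 1), tP (i + 1) k' = tP i k)
    (hmesh : Tendsto (fun i => ⨆ k : Fin (N i), (tP i (k.1 + 1) - tP i k.1))
      atTop (nhds 0))
    -- closed parameter set
    (S : Set (Eu m)) (hS : IsClosed S)
    -- dynamics and their regularity
    (f : ℝ → Eu n → Eu q → Eu m → Eu n) (h : ℝ → Eu n → Eu q → Eu m → Eu q)
    (hfc : Continuous fun p : ℝ × Eu n × Eu q × Eu m => f p.1 p.2.1 p.2.2.1 p.2.2.2)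
    (hhc : Continuous fun p : ℝ × Eu n × Eu q × Eu m => h p.1 p.2.1 p.2.2.1 p.2.2.2)
    (ρf ρh : ℝ → ℝ)
    (hρ : Tendsto (fun ε => ρf ε + ρh ε) (nhdsWithin 0 (Ioi 0)) (nhds 0))
    (hfu : ∀ ε > (0:ℝ), ∀ t ∈ Icc (0:ℝ) tf, ∀ t' ∈ Icc (0:ℝ) tf,
      ∀ (a a' : Eu n) (b b' : Eu q) (c c' : Eu m), c ∈ S → c' ∈ S →
      |t - t'| ≤ ε → ‖a - a'‖ ≤ ε → ‖b - b'‖ ≤ ε → ‖c - c'‖ ≤ ε →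
      ‖f t a b c - f t' a' b' c'‖ ≤ ρf ε)
    (hhu : ∀ ε > (0:ℝ), ∀ t ∈ Icc (0:ℝ) tf, ∀ t' ∈ Icc (0:ℝ) tf,
      ∀ (a a' : Eu n) (b b' : Eu q) (c c' : Eu m), c ∈ S → c' ∈ S →
      |t - t'| ≤ ε → ‖a - a'‖ ≤ ε → ‖b - b'‖ ≤ ε → ‖c - c'‖ ≤ ε →
      ‖h t a b c - h t' a' b' c'‖ ≤ ρh ε)
    (Lf Lh : Eu m → ℝ) (hLf : ∀ θ ∈ S, 0 < Lf θ) (hLh : ∀ θ ∈ S, 0 < Lh θ)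
    (hfLip : ∀ θ ∈ S, ∀ t ∈ Icc (0:ℝ) tf, ∀ (a a' : Eu n) (b b' : Eu q),
      ‖f t a b θ - f t a' b' θ‖ ≤ Lf θ * (‖a - a'‖ + ‖b - b'‖))
    (hhLip : ∀ θ ∈ S, ∀ t ∈ Icc (0:ℝ) tf, ∀ (a a' : Eu n) (b b' : Eu q),
      ‖h t a b θ - h t a' b' θ‖ ≤ Lh θ * (‖a - a'‖ + ‖b - b'‖))
    -- measurement likelihood: nonnegative, continuous w.r.t. the supremum norms
    (ψ : (ℝ → Eu n) → (ℝ → Eu q) → Eu m → ℝ)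
    (hψ0 : ∀ a b c, 0 ≤ ψ a b c)
    (hψc : ∀ (a : ℝ → Eu n) (b : ℝ → Eu q) (c : Eu m), ContinuousOn a (Icc 0 tf) →
      ContinuousOn b (Icc 0 tf) → ∀ ε > (0:ℝ), ∃ δ > (0:ℝ),
      ∀ (a' : ℝ → Eu n) (b' : ℝ → Eu q) (c' : Eu m), ContinuousOn a' (Icc 0 tf) →
        ContinuousOn b' (Icc 0 tf) →
        (∀ t ∈ Icc (0:ℝ) tf, ‖a' t - a t‖ ≤ δ) →
        (∀ t ∈ Icc (0:ℝ) tf, ‖b' t - b t‖ ≤ δ) → ‖c' - c‖ ≤ δ →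
        |ψ a' b' c' - ψ a b c| ≤ ε)
    -- prior: nonnegative, continuous, vanishing outside `int S`
    (pr : Eu n → Eu q → Eu m → ℝ)
    (hpr0 : ∀ a b c, 0 ≤ pr a b c)
    (hprc : Continuous fun p : Eu n × Eu q × Eu m => pr p.1 p.2.1 p.2.2)
    (hprv : ∀ a b c, c ∉ interior S → pr a b c = 0)
    -- invertible diffusion matrix
    (G : Eu n ≃L[ℝ] Eu n) :
    -- (a)
    (∀ (xi x'i : ℕ → ℝ → Eu n) (ζi : ℕ → Eu q) (ϑi : ℕ → Eu m)
      (x x' : ℝ → Eu n) (z0 : Eu q) (θ : Eu m),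
      (∀ i, IsW2 tf (xi i) (x'i i)) → IsW2 tf x x' →
      Tendsto (fun i => W2dist tf (xi i) (x'i i) x x' + ‖ζi i - z0‖ + ‖ϑi i - θ‖)
        atTop (nhds 0) →
      ∀ (L : ℕ → EReal) (Lv : EReal),
        (∀ i, EulerVal tf (N i) (tP i) S f h ψ pr (fun v => G.symm v)
          (xi i) (ζi i) (ϑi i) (L i)) →
        EnergyVal tf S f h ψ pr (fun v => G.symm v) x x' z0 θ Lv →
        limsup L atTop ≤ Lv) ∧
    -- (b)
    (∀ (x x' : ℝ → Eu n) (z0 : Eu q) (θ : Eu m), IsW2 tf x x' →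
      ∃ (xi x'i : ℕ → ℝ → Eu n) (ζi : ℕ → Eu q) (ϑi : ℕ → Eu m),
        (∀ i, IsW2 tf (xi i) (x'i i)) ∧
        Tendsto (fun i => W2dist tf (xi i) (x'i i) x x' + ‖ζi i - z0‖ + ‖ϑi i - θ‖)
          atTop (nhds 0) ∧
        ∀ (L : ℕ → EReal) (Lv : EReal),
          (∀ i, EulerVal tf (N i) (tP i) S f h ψ pr (fun v => G.symm v)
            (xi i) (ζi i) (ϑi i) (L i)) →
          EnergyVal tf S f h ψ pr (fun v => G.symm v) x x' z0 θ Lv →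
          Lv ≤ liminf L atTop) := by
  classical
  set M : ℕ → ℝ := fun i => ⨆ k : Fin (N i), (tP i (k.1 + 1) - tP i k.1) with hMdef
  have hP : ∀ i, TPart tf (N i) (tP i) (M i) := fun i =>
    ⟨htP0 i, htPN i, htPmono i, fun k hk =>
      le_ciSup (f := fun k : Fin (N i) => tP i (k.1 + 1) - tP i k.1)
        (Set.finite_range _).bddAbove ⟨k, hk⟩⟩
  have main : ∀ (l : Filter ℕ), l ≤ atTop →
      ∀ (xi x'i : ℕ → ℝ → Eu n) (ζi : ℕ → Eu q) (ϑi : ℕ → Eu m)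
      (x x' : ℝ → Eu n) (z0 : Eu q) (θ : Eu m),
      (∀ i, IsW2 tf (xi i) (x'i i)) → IsW2 tf x x' →
      Tendsto (fun i => W2dist tf (xi i) (x'i i) x x' + ‖ζi i - z0‖ + ‖ϑi i - θ‖)
        atTop (nhds 0) → θ ∈ S →
      (∀ᶠ i in l, IsPL tf (N i) (tP i) (xi i) ∧ ϑi i ∈ S) →
      ∀ (L : ℕ → EReal) (Lv : EReal),
        (∀ i, EulerVal tf (N i) (tP i) S f h ψ pr (fun v => G.symm v)
          (xi i) (ζi i) (ϑi i) (L i)) →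
        EnergyVal tf S f h ψ pr (fun v => G.symm v) x x' z0 θ Lv →
        Tendsto L l (nhds Lv) := by
    intro l hl xi x'i ζi ϑi x x' z0 θ hxi hx hconv hθ hgood L Lv hL hLv
    have hconv := hconv.mono_left hl
    have n0 : ∀ i, 0 ≤ W2dist tf (xi i) (x'i i) x x' := fun i => Real.sqrt_nonneg _
    have hd : Tendsto (fun i => W2dist tf (xi i) (x'i i) x x') l (nhds 0) :=
      squeeze_zero n0 (fun i => by linarith [norm_nonneg (ζi i - z0), norm_nonneg (ϑi i - θ)]) hconv
    have hζ : Tendsto (fun i => ‖ζi i - z0‖) l (nhds 0) :=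
      squeeze_zero (fun _ => norm_nonneg _)
        (fun i => by linarith [n0 i, norm_nonneg (ϑi i - θ)]) hconv
    have hϑ : Tendsto (fun i => ‖ϑi i - θ‖) l (nhds 0) :=
      squeeze_zero (fun _ => norm_nonneg _)
        (fun i => by linarith [n0 i, norm_nonneg (ζi i - z0)]) hconv
    obtain ⟨z, hzc, hz, rfl⟩ := hLv.2 hθ
    have hex : ∀ i, ∃ zt : ℝ → Eu q, (IsPL tf (N i) (tP i) (xi i) ∧ ϑi i ∈ S) →
        IsEulerPath (N i) (tP i) h (xi i) (ζi i) (ϑi i) zt ∧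
        L i = elog (ψ (xi i) zt (ϑi i)) + elog (pr (xi i 0) (ζi i) (ϑi i))
          - ((((1:ℝ) / 2) * eulerSum (N i) (tP i) f (fun v => G.symm v) (xi i) zt (ϑi i) : ℝ)
            : EReal) := by
      intro i
      by_cases hg : IsPL tf (N i) (tP i) (xi i) ∧ ϑi i ∈ S
      · obtain ⟨zt, h1⟩ := (hL i).2 hg
        exact ⟨zt, fun _ => h1⟩
      · exact ⟨fun _ => 0, fun h => absurd h hg⟩
    choose zt hzt using hex
    have t0 : (0:ℝ) ∈ Icc 0 tf := ⟨le_rfl, htf.le⟩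
    have hρf0 : ∀ ε > 0, 0 ≤ ρf ε := fun ε hε =>
      (norm_nonneg _).trans (hfu ε hε 0 t0 0 t0 0 0 0 0 θ θ hθ hθ (by simpa using hε.le)
        (by simpa using hε.le) (by simpa using hε.le) (by simpa using hε.le))
    have hρh0 : ∀ ε > 0, 0 ≤ ρh ε := fun ε hε =>
      (norm_nonneg _).trans (hhu ε hε 0 t0 0 t0 0 0 0 0 θ θ hθ hθ (by simpa using hε.le)
        (by simpa using hε.le) (by simpa using hε.le) (by simpa using hε.le))
    have hfU : UC tf S f := uc_of_mod hρ hρh0 hfu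
    have hhU : UC tf S h := uc_of_mod (by simpa only [add_comm] using hρ) hρf0 hhu
    obtain ⟨hsup, hsum⟩ := core htf hP (hmesh.mono_left hl) hfc hhc hfU hhU hθ (hLh θ hθ)
      (hhLip θ hθ) G hxi hx hd hζ hϑ (zt := zt)
      (hgood.mono fun i hi => ⟨hi.2, (hzt i hi).1⟩) hzc hz
    have hψ : Tendsto (fun i => ψ (xi i) (zt i) (ϑi i)) l (nhds (ψ x z θ)) := by
      rw [Metric.tendsto_nhds]
      intro ε hε
      obtain ⟨δ, hδ, hδ2⟩ := hψc x z θ hx.cont hzc (ε / 2) (by linarith)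
      filter_upwards [hgood, hsup δ hδ, hϑ.eventually_lt_const hδ] with i h1 h2 h3
      rw [Real.dist_eq]
      have := hδ2 (xi i) (zt i) (ϑi i) (hxi i).cont (euler_cont (hP i) (hzt i h1).1)
        (fun t ht => (h2 t ht).1) (fun t ht => (h2 t ht).2) h3.le
      linarith
    have hpr : Tendsto (fun i => pr (xi i 0) (ζi i) (ϑi i)) l (nhds (pr (x 0) z0 θ)) := by
      have h0 : Tendsto (fun i => xi i 0) l (nhds (x 0)) := by
        rw [tendsto_iff_norm_sub_tendsto_zero]
        exact squeeze_zero (fun _ => norm_nonneg _)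
          (fun i => (W2dist_sq tf (xi i) (x'i i) x x').1) hd
      exact (hprc.tendsto (x 0, z0, θ)).comp (h0.prodMk_nhds
        ((tendsto_iff_norm_sub_tendsto_zero.2 hζ).prodMk_nhds
          (tendsto_iff_norm_sub_tendsto_zero.2 hϑ)))
    refine (val_tendsto (hψ0 _ _ _) (hpr0 _ _ _) hψ hpr hsum).congr' ?_
    filter_upwards [hgood] with i hi
    exact (hzt i hi).2.symm
  refine ⟨?_, ?_⟩
  · intro xi x'i ζi ϑi x x' z0 θ hxi hx hconv L Lv hL hLv
    by_cases hθ : θ ∈ S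
    · set good : Set ℕ := {i | IsPL tf (N i) (tP i) (xi i) ∧ ϑi i ∈ S} with hgood
      have ht := main (atTop ⊓ 𝓟 good) inf_le_left xi x'i ζi ϑi x x' z0 θ hxi hx hconv hθ
        (mem_inf_of_right (mem_principal_self _)) L Lv hL hLv
      refine le_of_forall_gt_imp_ge_of_dense fun c hc => ?_
      refine limsup_le_of_le (by isBoundedDefault) ?_
      have h1 := ht.eventually_lt_const hc
      rw [eventually_inf_principal] at h1
      filter_upwards [h1] with i hi
      by_cases hg : i ∈ good
      · exact (hi hg).le
      · rw [(hL i).1 hg]; exact bot_le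
    · have hϑ : Tendsto ϑi atTop (nhds θ) := by
        rw [tendsto_iff_norm_sub_tendsto_zero]
        refine squeeze_zero (fun _ => norm_nonneg _) (fun i => ?_) hconv
        have : 0 ≤ W2dist tf (xi i) (x'i i) x x' := Real.sqrt_nonneg _
        linarith [norm_nonneg (ζi i - z0)]
      refine limsup_le_of_le (by isBoundedDefault) ?_
      filter_upwards [hϑ.eventually (hS.isOpen_compl.mem_nhds hθ)] with i hi
      rw [(hL i).1 (fun h => hi h.2)]; exact bot_le
  · intro x x' z0 θ hx
    set F : ℕ → ℕ → Eu n := fun i => slp x (tP i) with hF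
    have hm := fun i => step_memLp tf (N i) (tP i) (F i)
    have hW : ∀ i, IsW2 tf (fun t => x 0 + ∫ s in Ioc (0:ℝ) t, F i (pidx (N i) (tP i) s))
        (fun t => F i (pidx (N i) (tP i) t)) := fun i => w2_of_prim (hm i) (x 0)
    have hc : Tendsto (fun i => W2dist tf
        (fun t => x 0 + ∫ s in Ioc (0:ℝ) t, F i (pidx (N i) (tP i) s))
        (fun t => F i (pidx (N i) (tP i) t)) x x' + ‖z0 - z0‖ + ‖θ - θ‖) atTop (nhds 0) := by
      simp only [sub_self, norm_zero, add_zero]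
      have hI : Tendsto (fun i => ∫ t in Ioc 0 tf,
          ‖F i (pidx (N i) (tP i) t) - x' t‖ ^ 2) atTop (nhds 0) := by
        rw [Metric.tendsto_nhds]
        intro ε hε
        obtain ⟨M₀, hM₀, hav⟩ := avg_conv hx.memLp (show 0 < ε / 4 by linarith)
        filter_upwards [hmesh.eventually_lt_const hM₀] with i h1
        rw [Real.dist_eq, sub_zero, abs_of_nonneg (integral_nonneg fun _ => by positivity)]
        have h2 := slp_bound hx hx (hP i)
        simp only [sub_self, norm_zero, ne_eq, OfNat.ofNat_ne_zero, not_false_eq_true, zero_pow,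
          integral_zero, mul_zero, zero_add] at h2
        linarith [hav _ _ _ (hP i) h1.le]
      have h3 := hI.sqrt
      rw [Real.sqrt_zero] at h3
      refine h3.congr fun i => ?_
      simp [W2dist]
    refine ⟨_, _, fun _ => z0, fun _ => θ, hW, hc, ?_⟩
    intro L Lv hL hLv
    by_cases hθ : θ ∈ S
    · exact (main atTop le_rfl _ _ _ _ x x' z0 θ hW hx hc hθ
        (Eventually.of_forall fun i => ⟨pl_interp (hP i) (F i) (x 0), hθ⟩) L Lv hL
        hLv).liminf_eq.ge
    · rw [hLv.1 hθ]; exact bot_le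
end

section
/- Let x ∈ W²_n, z₀ ∈ ℝ^q and θ ∈ int S, and let (x̂_i, ζ_i, ϑ_i) be a sequence with x̂_i ∈ PL(𝒫_i, ℝⁿ), ζ_i ∈ ℝ^q, ϑ_i ∈ S such that lim_{i→∞} (‖x̂_i − x‖_{W²} + |ζ_i − z₀| + |ϑ_i − θ|) = 0, and let ẑ_i ∈ PL(𝒫_i, ℝ^q) be the trapezoidally-discretized clean-state path associated with (x̂_i, ζ_i, ϑ_i). Then the functions ẑ_i are Lipschitz equicontinuous: there exists L_ẑ > 0 such that |ẑ_i(t) − ẑ_i(τ)| ≤ L_ẑ |t − τ| for all t, τ ∈ 𝒯 and all i ∈ ℕ. -/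
open MeasureTheory Filter Set

lemma aux_pc {E : Type*} [NormedAddCommGroup E] (N : ℕ) (tP : ℕ → ℝ) (h0 : tP 0 = 0)
    (hm : ∀ k < N, tP k < tP (k + 1)) (g : ℝ → E)
    (hg : ∀ k < N, ∃ b : E, ∀ s ∈ Ico (tP k) (tP (k + 1)), g s = b) :
    ∀ k ≤ N, IntegrableOn g (Ico 0 (tP k)) := by
  intro k
  induction k with
  | zero => intro _; simp [h0]
  | succ k ih =>
    intro hk
    have h1 := ih (by omega)
    obtain ⟨b, hb⟩ := hg k (by omega)
    have h2 : IntegrableOn g (Ico (tP k) (tP (k + 1))) := by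
      have : IntegrableOn (fun _ : ℝ => b) (Ico (tP k) (tP (k + 1))) :=
        integrableOn_const (by simp)
      exact this.congr_fun (fun s hs => (hb s hs).symm) measurableSet_Ico
    exact (h1.union h2).mono_set Ico_subset_Ico_union_Ico

lemma aux_mono (N : ℕ) (tP : ℕ → ℝ) (hm : ∀ k < N, tP k < tP (k + 1)) (k j : ℕ)
    (hkj : k ≤ j) (hj : j ≤ N) : tP k ≤ tP j := by
  induction j, hkj using Nat.le_induction with
  | base => exact le_rfl
  | succ j hkj ih => exact (ih (by omega)).trans (hm j (by omega)).le

lemma aux_step (a b δ M Lf Lh : ℝ) (hLf : 0 < Lf) (hLh : 0 < Lh) (hM : 0 ≤ M) (ha : 0 ≤ a)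
    (hδ : 0 ≤ δ) (hd : (Lf + Lh) * δ < 2)
    (hab : b ≤ a + δ / 2 * ((M + Lh * a) + (M + Lh * b))) :
    b + M / Lh ≤ Real.exp (Lh * (Lf + Lh) / Lf * δ) * (a + M / Lh) := by
  set c := M / Lh with hc
  have hMc : M = Lh * c := by rw [hc]; field_simp
  have hc0 : 0 ≤ c := by positivity
  set K := Lh * (Lf + Lh) / Lf with hK
  have hK0 : 0 ≤ K := by positivity
  have hKe : K * Lf = Lh * (Lf + Lh) := by rw [hK]; field_simp
  have h1 : (1 - Lh * δ / 2) * (b + c) ≤ (1 + Lh * δ / 2) * (a + c) := by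
    rw [hMc] at hab; nlinarith
  have hs : 0 < Lf + Lh := by positivity
  have h2 : Lf ≤ (Lf + Lh) * (1 - Lh * δ / 2) := by nlinarith
  have h2p : 0 < 1 - Lh * δ / 2 := by
    by_contra hcon
    push Not at hcon
    nlinarith
  have h3 : Lh ≤ (1 - Lh * δ / 2) * K := by
    have : Lh * Lf ≤ (1 - Lh * δ / 2) * K * Lf := by
      calc Lh * Lf ≤ Lh * ((Lf + Lh) * (1 - Lh * δ / 2)) := by gcongr
        _ = (1 - Lh * δ / 2) * (K * Lf) := by rw [hKe]; ring
        _ = _ := by ring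
    exact le_of_mul_le_mul_right this hLf
  have h4 : 1 + Lh * δ / 2 ≤ (1 - Lh * δ / 2) * (1 + K * δ) := by nlinarith
  have h5 : (1 - Lh * δ / 2) * (b + c) ≤ (1 - Lh * δ / 2) * ((1 + K * δ) * (a + c)) := by
    refine h1.trans ?_
    rw [← mul_assoc]
    gcongr
  have h6 := le_of_mul_le_mul_left h5 h2p
  refine h6.trans ?_
  have := Real.add_one_le_exp (K * δ)
  gcongr
  linarith

lemma aux_glue {E : Type*} [NormedAddCommGroup E] (N : ℕ) (tP : ℕ → ℝ) (h0 : tP 0 = 0)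
    (hm : ∀ k < N, tP k < tP (k + 1)) (z : ℝ → E) (L : ℝ)
    (hz : ∀ k < N, ∀ t ∈ Icc (tP k) (tP (k + 1)), ∀ u ∈ Icc (tP k) (tP (k + 1)),
      ‖z t - z u‖ ≤ L * |t - u|) :
    ∀ k ≤ N, ∀ t ∈ Icc 0 (tP k), ∀ u ∈ Icc 0 (tP k), ‖z t - z u‖ ≤ L * |t - u| := by
  intro k
  induction k with
  | zero =>
    intro _ t ht u hu
    rw [h0] at ht hu
    have e1 : t = 0 := le_antisymm ht.2 ht.1
    have e2 : u = 0 := le_antisymm hu.2 hu.1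
    simp [e1, e2]
  | succ k ih =>
    intro hk t ht u hu
    have ih := ih (by omega)
    have hz := hz k (by omega)
    have hmk := hm k (by omega)
    have h0k : 0 ≤ tP k := by
      have := aux_mono N tP hm 0 k (by omega) (by omega)
      rwa [h0] at this
    have key : ∀ t ∈ Icc 0 (tP k), ∀ u ∈ Icc (tP k) (tP (k + 1)), ‖z t - z u‖ ≤ L * |t - u| := by
      intro t ht u hu
      have a1 := ih t ht (tP k) ⟨h0k, le_rfl⟩
      have a2 := hz (tP k) ⟨le_rfl, hmk.le⟩ u hu
      have a3 := norm_sub_le_norm_sub_add_norm_sub (z t) (z (tP k)) (z u)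
      rw [abs_of_nonpos (by linarith [ht.2])] at a1
      rw [abs_of_nonpos (by linarith [hu.1])] at a2
      rw [abs_of_nonpos (by linarith [ht.2, hu.1])]
      linarith
    rcases le_total t (tP k) with h1 | h1 <;> rcases le_total u (tP k) with h2 | h2
    · exact ih t ⟨ht.1, h1⟩ u ⟨hu.1, h2⟩
    · exact key t ⟨ht.1, h1⟩ u ⟨h2, hu.2⟩
    · rw [norm_sub_rev, abs_sub_comm]
      exact key u ⟨hu.1, h2⟩ t ⟨h1, ht.2⟩
    · exact hz t ⟨h1, ht.2⟩ u ⟨h2, hu.2⟩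

/-- Lipschitz equicontinuity of trapezoidally-discretized clean-state
paths: if `(x̂_i, ζ_i, ϑ_i) → (x, z₀, θ)` with `θ ∈ int S` and `ϑ_i ∈ S`, then the
associated trapezoidally-discretized clean-state paths `ẑ_i` are Lipschitz
equicontinuous on `[0, t_f]`. Piecewise linear `x̂_i ∈ PL(𝒫_i)` are encoded by their
piecewise constant derivatives `d i`; the `W²` function `x` by the pair `(x, x')`. -/
theorem stmt11 {n q m : ℕ} (tf : ℝ) (htf : 0 < tf)
    (N : ℕ → ℕ) (hN1 : ∀ i, 1 ≤ N i) (tP : ℕ → ℕ → ℝ)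
    (htP0 : ∀ i, tP i 0 = 0) (htPN : ∀ i, tP i (N i) = tf)
    (htPmono : ∀ i, ∀ k < N i, tP i k < tP i (k + 1))
    (hnested : ∀ i, ∀ k ≤ N i, ∃ k' ≤ N (i + 1), tP (i + 1) k' = tP i k)
    (hmesh : Tendsto (fun i => ⨆ k : Fin (N i), (tP i (k.1 + 1) - tP i k.1))
      atTop (nhds 0))
    (S : Set (EuclideanSpace ℝ (Fin m)))
    (h : ℝ → EuclideanSpace ℝ (Fin n) → EuclideanSpace ℝ (Fin q) →
      EuclideanSpace ℝ (Fin m) → EuclideanSpace ℝ (Fin q))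
    (hhc : Continuous fun p : ℝ × EuclideanSpace ℝ (Fin n) × EuclideanSpace ℝ (Fin q) ×
      EuclideanSpace ℝ (Fin m) => h p.1 p.2.1 p.2.2.1 p.2.2.2)
    (Lf Lh : ℝ) (hLf : 0 < Lf) (hLh : 0 < Lh)
    (hhLip : ∀ θ' ∈ S, ∀ t ∈ Icc (0:ℝ) tf,
      ∀ (a a' : EuclideanSpace ℝ (Fin n)) (b b' : EuclideanSpace ℝ (Fin q)),
      ‖h t a b θ' - h t a' b' θ'‖ ≤ Lh * (‖a - a'‖ + ‖b - b'‖))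
    (hmeshLip : ∀ i, ∀ k < N i, (Lf + Lh) * (tP i (k + 1) - tP i k) < 2)
    -- the limit point
    (x x' : ℝ → EuclideanSpace ℝ (Fin n))
    (hInt : IntegrableOn x' (Icc 0 tf))
    (hL2 : IntegrableOn (fun t => ‖x' t‖ ^ 2) (Icc 0 tf))
    (hAC : ∀ t ∈ Icc (0:ℝ) tf, x t = x 0 + ∫ s in Ioc (0:ℝ) t, x' s)
    (z0 : EuclideanSpace ℝ (Fin q))
    (θ : EuclideanSpace ℝ (Fin m)) (hθ : θ ∈ interior S)
    -- the approximating sequence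
    (xh d : ℕ → ℝ → EuclideanSpace ℝ (Fin n))
    (hdpc : ∀ i, ∀ k < N i, ∃ b : EuclideanSpace ℝ (Fin n),
      ∀ s ∈ Ico (tP i k) (tP i (k + 1)), d i s = b)
    (hxhAC : ∀ i, ∀ s ∈ Icc (0:ℝ) tf, xh i s = xh i 0 + ∫ u in Ioc (0:ℝ) s, d i u)
    (ζ : ℕ → EuclideanSpace ℝ (Fin q)) (ϑ : ℕ → EuclideanSpace ℝ (Fin m))
    (hϑS : ∀ i, ϑ i ∈ S)
    (hconv : Tendsto (fun i =>
      Real.sqrt (‖xh i 0 - x 0‖ ^ 2 + ∫ s in Ioc (0:ℝ) tf, ‖d i s - x' s‖ ^ 2)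
      + ‖ζ i - z0‖ + ‖ϑ i - θ‖) atTop (nhds 0))
    -- the trapezoidally-discretized clean-state paths
    (zh : ℕ → ℝ → EuclideanSpace ℝ (Fin q))
    (hzh0 : ∀ i, zh i 0 = ζ i)
    (hzhrec : ∀ i, ∀ k < N i, ∀ s ∈ Ioc (tP i k) (tP i (k + 1)),
      zh i s = zh i (tP i k) + ((s - tP i k) / 2) •
        (h (tP i k) (xh i (tP i k)) (zh i (tP i k)) (ϑ i) +
         h (tP i (k + 1)) (xh i (tP i (k + 1))) (zh i (tP i (k + 1))) (ϑ i))) :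
    ∃ Lz > (0:ℝ), ∀ i, ∀ t ∈ Icc (0:ℝ) tf, ∀ u ∈ Icc (0:ℝ) tf,
      ‖zh i t - zh i u‖ ≤ Lz * |t - u| := by
  obtain ⟨C, hC⟩ := hconv.bddAbove_range
  replace hC : ∀ i, Real.sqrt (‖xh i 0 - x 0‖ ^ 2 + ∫ s in Ioc (0:ℝ) tf, ‖d i s - x' s‖ ^ 2)
      + ‖ζ i - z0‖ + ‖ϑ i - θ‖ ≤ C := fun i => hC ⟨i, rfl⟩
  have hζ : ∀ i, ‖ζ i - z0‖ ≤ C := fun i => by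
    linarith [hC i, norm_nonneg (ϑ i - θ), Real.sqrt_nonneg
      (‖xh i 0 - x 0‖ ^ 2 + ∫ s in Ioc (0:ℝ) tf, ‖d i s - x' s‖ ^ 2)]
  have hϑ : ∀ i, ‖ϑ i - θ‖ ≤ C := fun i => by
    linarith [hC i, norm_nonneg (ζ i - z0), Real.sqrt_nonneg
      (‖xh i 0 - x 0‖ ^ 2 + ∫ s in Ioc (0:ℝ) tf, ‖d i s - x' s‖ ^ 2)]
  have hC0 : 0 ≤ C := (norm_nonneg _).trans (hζ 0)
  have hI0 : ∀ i, 0 ≤ ∫ s in Ioc (0:ℝ) tf, ‖d i s - x' s‖ ^ 2 := fun i =>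
    integral_nonneg fun s => by positivity
  have hsq : ∀ i, ‖xh i 0 - x 0‖ ^ 2 + ∫ s in Ioc (0:ℝ) tf, ‖d i s - x' s‖ ^ 2 ≤ C ^ 2 := by
    intro i
    refine (Real.sqrt_le_left hC0).1 ?_
    linarith [hC i, norm_nonneg (ϑ i - θ), norm_nonneg (ζ i - z0)]
  have hx0 : ∀ i, ‖xh i 0 - x 0‖ ≤ C := fun i =>
    le_of_sq_le_sq (by linarith [hsq i, hI0 i]) hC0
  have hI : ∀ i, ∫ s in Ioc (0:ℝ) tf, ‖d i s - x' s‖ ^ 2 ≤ C ^ 2 := fun i => by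
    linarith [hsq i, sq_nonneg ‖xh i 0 - x 0‖]
  have hInt' : IntegrableOn x' (Ioc 0 tf) := hInt.mono_set Ioc_subset_Icc_self
  have hL2' : IntegrableOn (fun t => ‖x' t‖ ^ 2) (Ioc 0 tf) := hL2.mono_set Ioc_subset_Icc_self
  have hdI : ∀ i, IntegrableOn (d i) (Ioc 0 tf) := by
    intro i
    have := aux_pc (N i) (tP i) (htP0 i) (htPmono i) (d i) (hdpc i) (N i) le_rfl
    rw [htPN] at this
    exact this.congr_set_ae Ico_ae_eq_Ioc.symm
  have hd2 : ∀ i, IntegrableOn (fun t => ‖d i t‖ ^ 2) (Ioc 0 tf) := by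
    intro i
    have := aux_pc (N i) (tP i) (htP0 i) (htPmono i) (fun t => ‖d i t‖ ^ 2) (by
      intro k hk
      obtain ⟨b, hb⟩ := hdpc i k hk
      exact ⟨‖b‖ ^ 2, fun s hs => by simp only [hb s hs]⟩) (N i) le_rfl
    rw [htPN] at this
    exact this.congr_set_ae Ico_ae_eq_Ioc.symm
  have hdx2 : ∀ i, IntegrableOn (fun t => ‖d i t - x' t‖ ^ 2) (Ioc 0 tf) := by
    intro i
    have h1 := (memLp_two_iff_integrable_sq_norm (hdI i).aestronglyMeasurable).2 (hd2 i)
    have h2 := (memLp_two_iff_integrable_sq_norm hInt'.aestronglyMeasurable).2 hL2'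
    have h3 := h1.sub h2
    exact (memLp_two_iff_integrable_sq_norm h3.aestronglyMeasurable).1 h3
  obtain ⟨R, hR⟩ : ∃ R, ∀ i, ∀ t ∈ Icc (0:ℝ) tf, ‖xh i t‖ ≤ R := by
    refine ⟨(‖x 0‖ + C) + ((∫ s in Ioc (0:ℝ) tf, (‖x' s‖ + 1)) + C ^ 2), ?_⟩
    intro i t ht
    rw [hxhAC i t ht]
    have e1 : ‖xh i 0‖ ≤ ‖x 0‖ + C := by
      have := norm_le_norm_add_norm_sub' (xh i 0) (x 0)
      linarith [hx0 i]
    have hone : IntegrableOn (fun _ : ℝ => (1:ℝ)) (Ioc 0 tf) := integrableOn_const (by simp)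
    have e2 : ‖∫ u in Ioc (0:ℝ) t, d i u‖ ≤ (∫ s in Ioc (0:ℝ) tf, (‖x' s‖ + 1)) + C ^ 2 := by
      calc ‖∫ u in Ioc (0:ℝ) t, d i u‖ ≤ ∫ u in Ioc (0:ℝ) t, ‖d i u‖ :=
            norm_integral_le_integral_norm _
        _ ≤ ∫ u in Ioc (0:ℝ) tf, ‖d i u‖ :=
            setIntegral_mono_set (hdI i).norm (Eventually.of_forall fun s => norm_nonneg _)
              (Ioc_subset_Ioc_right ht.2).eventuallyLE
        _ ≤ ∫ s in Ioc (0:ℝ) tf, ((‖x' s‖ + 1) + ‖d i s - x' s‖ ^ 2) := by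
            refine integral_mono (hdI i).norm ((hInt'.norm.add hone).add (hdx2 i)) ?_
            intro s
            have := norm_le_norm_add_norm_sub' (d i s) (x' s)
            simp only
            nlinarith [sq_nonneg (‖d i s - x' s‖ - 1), norm_nonneg (d i s - x' s)]
        _ = (∫ s in Ioc (0:ℝ) tf, (‖x' s‖ + 1)) + ∫ s in Ioc (0:ℝ) tf, ‖d i s - x' s‖ ^ 2 :=
            integral_add (hInt'.norm.add hone) (hdx2 i)
        _ ≤ _ := by linarith [hI i]
    exact (norm_add_le _ _).trans (add_le_add e1 e2)
  obtain ⟨M, hM⟩ : ∃ M, ∀ t ∈ Icc (0:ℝ) tf, ∀ a : EuclideanSpace ℝ (Fin n), ‖a‖ ≤ R →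
      ∀ i, ‖h t a 0 (ϑ i)‖ ≤ M := by
    have hcpt : IsCompact ((Icc (0:ℝ) tf) ×ˢ (Metric.closedBall (0 : EuclideanSpace ℝ (Fin n)) R) ×ˢ
        ({0} : Set (EuclideanSpace ℝ (Fin q))) ×ˢ Metric.closedBall θ C) :=
      isCompact_Icc.prod ((isCompact_closedBall _ _).prod
        (isCompact_singleton.prod (isCompact_closedBall _ _)))
    obtain ⟨M, hM⟩ := hcpt.exists_bound_of_continuousOn hhc.continuousOn
    refine ⟨M, fun t ht a ha i => ?_⟩
    refine hM (t, a, 0, ϑ i) ⟨ht, ?_, rfl, ?_⟩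
    · simpa using ha
    · simpa [dist_eq_norm] using hϑ i
  have hR0 : 0 ≤ R := (norm_nonneg _).trans (hR 0 0 ⟨le_rfl, htf.le⟩)
  have hM0 : 0 ≤ M := (norm_nonneg _).trans (hM 0 ⟨le_rfl, htf.le⟩ 0 (by simpa using hR0) 0)
  have htmem : ∀ i, ∀ k ≤ N i, tP i k ∈ Icc (0:ℝ) tf := by
    intro i k hk
    constructor
    · rw [← htP0 i]; exact aux_mono (N i) (tP i) (htPmono i) 0 k (by omega) hk
    · rw [← htPN i]; exact aux_mono (N i) (tP i) (htPmono i) k (N i) hk le_rfl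
  have hhb : ∀ i, ∀ k ≤ N i, ‖h (tP i k) (xh i (tP i k)) (zh i (tP i k)) (ϑ i)‖
      ≤ M + Lh * ‖zh i (tP i k)‖ := by
    intro i k hk
    have h1 := hhLip (ϑ i) (hϑS i) _ (htmem i k hk) (xh i (tP i k)) (xh i (tP i k))
      (zh i (tP i k)) 0
    have h2 := hM _ (htmem i k hk) _ (hR i _ (htmem i k hk)) i
    have h3 := norm_le_norm_add_norm_sub' (h (tP i k) (xh i (tP i k)) (zh i (tP i k)) (ϑ i))
      (h (tP i k) (xh i (tP i k)) 0 (ϑ i))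
    simp only [sub_self, norm_zero, sub_zero, zero_add] at h1
    linarith
  set K := Lh * (Lf + Lh) / Lf with hK
  have hK0 : 0 ≤ K := by positivity
  set W := ‖z0‖ + C + M / Lh with hW
  have hW0 : 0 ≤ W := by positivity
  have hgr : ∀ i, ∀ k ≤ N i, ‖zh i (tP i k)‖ + M / Lh ≤ Real.exp (K * tP i k) * W := by
    intro i k
    induction k with
    | zero =>
      intro _
      rw [htP0, hzh0]
      have := norm_le_norm_add_norm_sub' (ζ i) z0
      simp only [mul_zero, Real.exp_zero, one_mul, hW]
      linarith [hζ i]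
    | succ k ih =>
      intro hk
      have ih := ih (by omega)
      have hmk := htPmono i k (by omega)
      have hrec := hzhrec i k (by omega) (tP i (k + 1)) ⟨hmk, le_rfl⟩
      have hst := aux_step ‖zh i (tP i k)‖ ‖zh i (tP i (k + 1))‖ (tP i (k + 1) - tP i k) M Lf Lh
        hLf hLh hM0 (norm_nonneg _) (by linarith) (hmeshLip i k (by omega)) (by
          conv_lhs => rw [hrec]
          refine (norm_add_le _ _).trans ?_
          rw [norm_smul, Real.norm_of_nonneg (by linarith)]
          have hp : 0 ≤ (tP i (k + 1) - tP i k) / 2 := by linarith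
          gcongr
          exact (norm_add_le _ _).trans (add_le_add (hhb i k (by omega)) (hhb i (k + 1) hk)))
      refine hst.trans ?_
      calc _ ≤ Real.exp (K * (tP i (k + 1) - tP i k)) * (Real.exp (K * tP i k) * W) := by
            rw [← hK]; gcongr
        _ = _ := by rw [← mul_assoc, ← Real.exp_add]; ring_nf
  set B := Real.exp (K * tf) * W with hB
  have hB0 : 0 ≤ B := by positivity
  have hzb : ∀ i, ∀ k ≤ N i, ‖zh i (tP i k)‖ ≤ B := by
    intro i k hk
    have h1 := hgr i k hk
    have h2 : Real.exp (K * tP i k) * W ≤ B := by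
      rw [hB]
      have := (htmem i k hk).2
      gcongr
    have h3 : 0 ≤ M / Lh := by positivity
    linarith
  refine ⟨M + Lh * B + 1, by positivity, fun i t ht u hu => ?_⟩
  rw [← htPN i] at ht hu
  refine aux_glue (N i) (tP i) (htP0 i) (htPmono i) (zh i) _ ?_ (N i) le_rfl t ht u hu
  intro k hk t ht u hu
  set v := h (tP i k) (xh i (tP i k)) (zh i (tP i k)) (ϑ i) +
         h (tP i (k + 1)) (xh i (tP i (k + 1))) (zh i (tP i (k + 1))) (ϑ i) with hv
  have hvb : ‖v‖ ≤ 2 * (M + Lh * B) := by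
    have h1 := hhb i k hk.le
    have h2 := hhb i (k + 1) hk
    have h3 : Lh * ‖zh i (tP i k)‖ ≤ Lh * B := by gcongr; exact hzb i k hk.le
    have h4 : Lh * ‖zh i (tP i (k + 1))‖ ≤ Lh * B := by gcongr; exact hzb i (k + 1) hk
    have := norm_add_le (h (tP i k) (xh i (tP i k)) (zh i (tP i k)) (ϑ i))
      (h (tP i (k + 1)) (xh i (tP i (k + 1))) (zh i (tP i (k + 1))) (ϑ i))
    rw [hv]; linarith
  have hform : ∀ s ∈ Icc (tP i k) (tP i (k + 1)),
      zh i s = zh i (tP i k) + ((s - tP i k) / 2) • v := by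
    intro s hs
    rcases hs.1.eq_or_lt with he | hlt
    · rw [← he]; simp
    · exact hzhrec i k hk s ⟨hlt, hs.2⟩
  have hdiff : zh i t - zh i u = ((t - u) / 2) • v := by
    rw [hform t ht, hform u hu, add_sub_add_left_eq_sub, ← sub_smul]
    congr 1; ring
  rw [hdiff, norm_smul, Real.norm_eq_abs, abs_div, abs_two]
  nlinarith [abs_nonneg (t - u)]
end
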